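/- arXiv:2305.05339 — 10 statements merged into one kernel-verified Lean document; each statement's English description precedes it below -/
import Mathlib

section
/- There exist a Lelek fan L (i.e., a non-degenerate subcontinuum L of the Cantor fan satisfying Cl(E(L)) = L) and a topological embedding of the Cantor fan into L. In other words, the Cantor fan is embeddable into the Lelek fan. -/
/-!
With the Cantor set identified with `ℕ → Bool`, a closed subset of the Cantor fan that is star-shaped
about the vertex is given by an upper semicontinuous function, the length of each blade. Here
the blade with index `a` has length `max 0 (1 - ∑ k, a (2 k + 1) / (k + 1))`, which is upper
semicontinuous as an infimum of continuous functions (`isCompact_hypo`).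

The tips of the nondegenerate blades are end-points (`fanPt_mem_endpointSet`), and they are dense:
since the harmonic series diverges and its terms tend to zero, changing only far digits of `a` can
shorten the blade to any smaller positive length with arbitrarily small error (`exists_tip_near`).
So the resulting fan `lelek` is a Lelek fan.

The length depends on the odd digits only and equals `1` when they all vanish. The blades indexed by
such sequences form a copy of the Cantor fan inside `lelek`, through `spread`, which inserts `false`
at the odd places.
-/

open Set Topology

noncomputable section

/-- The Cantor fan: union of segments from (0,0) to (c,-1) for c in the ternary Cantor set. -/
def cantorFan : Set (ℝ × ℝ) := ⋃ c ∈ cantorSet, segment ℝ ((0 : ℝ), (0 : ℝ)) (c, (-1 : ℝ))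

/-- `Y` is a subcontinuum of `X`: a nonempty compact connected subset of `X`. -/
def IsSubcontinuum (Y X : Set (ℝ × ℝ)) : Prop :=
  Y ⊆ X ∧ Y.Nonempty ∧ IsCompact Y ∧ IsConnected Y

/-- A subset `A` of a topological space is an arc if it is homeomorphic to `[0,1]`. -/
def IsArc {X : Type*} [TopologicalSpace X] (A : Set X) : Prop :=
  Nonempty (A ≃ₜ unitInterval)

/-- `x` is an end-point of the arc `A`: the image of `0` or `1` under some homeomorphism
`[0,1] ≃ₜ A`. -/
def IsArcEndpoint {X : Type*} [TopologicalSpace X] (A : Set X) (x : X) : Prop :=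
  ∃ h : unitInterval ≃ₜ A, ((h 0 : X) = x ∨ (h 1 : X) = x)

/-- The set `E(Y)` of end-points of `Y`: points `x ∈ Y` such that for every arc `A ⊆ Y`
containing `x`, `x` is an end-point of `A`. -/
def endpointSet {X : Type*} [TopologicalSpace X] (Y : Set X) : Set X :=
  {x | x ∈ Y ∧ ∀ A : Set X, A ⊆ Y → IsArc A → x ∈ A → IsArcEndpoint A x}

/-- `Y` is a Lelek fan (as a subset of the plane): a non-degenerate subcontinuum of the
Cantor fan whose set of end-points is dense in it. -/
def IsLelekFan (Y : Set (ℝ × ℝ)) : Prop :=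
  IsSubcontinuum Y cantorFan ∧ Y.Nontrivial ∧ closure (endpointSet Y) = Y

/-- The Mahavier product `X⁺_F` of a relation `F` on `[0,1]`. -/
def mahavier (F : Set (ℝ × ℝ)) : Set (ℕ → ℝ) :=
  {x | (∀ k, x k ∈ Icc (0 : ℝ) 1) ∧ ∀ k, (x k, x (k + 1)) ∈ F}

/-- `L_r = {(x, y) ∈ [0,1] × [0,1] | y = r x}`. -/
def lineL (r : ℝ) : Set (ℝ × ℝ) :=
  {p | p.1 ∈ Icc (0 : ℝ) 1 ∧ p.2 ∈ Icc (0 : ℝ) 1 ∧ p.2 = r * p.1}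

/-- The diagonal `{(t, t) | t ∈ [0,1]}`. -/
def unitDiag : Set (ℝ × ℝ) := {p | p.1 ∈ Icc (0 : ℝ) 1 ∧ p.2 = p.1}

/-- `(r, ρ) ∈ NC` : `r` and `ρ` never connect. -/
def NC (r ρ : ℝ) : Prop :=
  0 < r ∧ r < 1 ∧ 1 < ρ ∧ ∀ k l : ℤ, r ^ k = ρ ^ l ↔ k = 0 ∧ l = 0

/-- `B_𝐚 = {(t, 𝐚(1)t, 𝐚(2)𝐚(1)t, …) | t ∈ [0,1]}` for a sequence `𝐚`. -/
def Bset (a : ℕ → ℝ) : Set (ℕ → ℝ) :=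
  {x | ∃ t ∈ Icc (0 : ℝ) 1, ∀ n, x n = (∏ i ∈ Finset.range n, a i) * t}

/-! ### Coordinates on the Cantor fan -/

/-- The point of the Cantor set whose ternary digits are given by the binary sequence `a`. -/
def cantorPt (a : ℕ → Bool) : ℝ := (cantorSetHomeomorphNatToBool.symm a : ℝ)

lemma continuous_cantorPt : Continuous cantorPt :=
  continuous_subtype_val.comp cantorSetHomeomorphNatToBool.symm.continuous

lemma cantorPt_mem (a : ℕ → Bool) : cantorPt a ∈ cantorSet :=
  (cantorSetHomeomorphNatToBool.symm a).2

lemma cantorPt_injective : Function.Injective cantorPt :=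
  Subtype.val_injective.comp cantorSetHomeomorphNatToBool.symm.injective

lemma exists_cantorPt {c : ℝ} (hc : c ∈ cantorSet) : ∃ a, cantorPt a = c :=
  ⟨cantorSetHomeomorphNatToBool ⟨c, hc⟩, by simp [cantorPt]⟩

lemma isTotallyDisconnected_cantorSet : IsTotallyDisconnected cantorSet := by
  rw [← totallyDisconnectedSpace_subtype_iff]
  exact cantorSetHomeomorphNatToBool.symm.totallyDisconnectedSpace

/-- The point at height `s` below the vertex on the blade of the Cantor fan with index `a`. -/
def fanPt (z : (ℕ → Bool) × ℝ) : ℝ × ℝ := (z.2 * cantorPt z.1, -z.2)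

lemma continuous_fanPt : Continuous fanPt := by
  have := continuous_cantorPt
  unfold fanPt
  fun_prop

lemma fanPt_eq_iff {a b : ℕ → Bool} {s t : ℝ} :
    fanPt (a, s) = fanPt (b, t) ↔ s = t ∧ (s = 0 ∨ a = b) := by
  simp only [fanPt, Prod.mk.injEq, neg_inj]
  constructor
  · rintro ⟨h, rfl⟩
    refine ⟨rfl, ?_⟩
    rcases mul_eq_mul_left_iff.1 h with h | h
    · exact Or.inr (cantorPt_injective h)
    · exact Or.inl h
  · rintro ⟨rfl, rfl | rfl⟩ <;> simp

lemma cantorFan_eq_image : cantorFan = fanPt '' (univ ×ˢ Icc 0 1) := by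
  ext p
  simp only [cantorFan, mem_iUnion, segment_eq_image, mem_image, mem_prod, mem_univ, true_and,
    Prod.exists, exists_prop]
  constructor
  · rintro ⟨c, hc, t, ht, rfl⟩
    obtain ⟨a, rfl⟩ := exists_cantorPt hc
    exact ⟨a, t, ht, by simp [fanPt]⟩
  · rintro ⟨a, t, ht, rfl⟩
    exact ⟨_, cantorPt_mem a, t, ht, by simp [fanPt]⟩

/-! ### The Lelek fan -/

/-- The partial sum over `k < N` of the weights `1 / (k + 1)` selected by the odd digits of `a`. -/
def oddSum (a : ℕ → Bool) (N : ℕ) : ℝ :=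
  ∑ k ∈ Finset.range N, if a (2 * k + 1) then (1 : ℝ) / (k + 1) else 0

lemma continuous_oddSum (N : ℕ) : Continuous fun a => oddSum a N := by
  unfold oddSum
  refine continuous_finsetSum _ fun k _ => ?_
  exact (continuous_of_discreteTopology
    (f := fun b : Bool => if b then (1 : ℝ) / (k + 1) else 0)).comp (continuous_apply (2 * k + 1))

lemma oddSum_mono (a : ℕ → Bool) : Monotone (oddSum a) := by
  refine monotone_nat_of_le_succ fun n => ?_
  simp only [oddSum, Finset.sum_range_succ]
  split_ifs
  · have : (0 : ℝ) ≤ 1 / ((n : ℝ) + 1) := by positivity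
    linarith
  · simp

/-- The hypograph of the length function `a ↦ max 0 (1 - sup_N (oddSum a N))`: pairs of a blade and
a height not exceeding the length of that blade. -/
def hypo : Set ((ℕ → Bool) × ℝ) := {z | 0 ≤ z.2 ∧ ∀ N, z.2 ≤ max 0 (1 - oddSum z.1 N)}

/-- The Lelek fan obtained by truncating the blades of the Cantor fan to `hypo`. -/
def lelek : Set (ℝ × ℝ) := fanPt '' hypo

lemma hypo_subset : hypo ⊆ univ ×ˢ Icc 0 1 := by
  rintro ⟨a, s⟩ ⟨h0, h⟩
  exact ⟨trivial, h0, by simpa [oddSum] using h 0⟩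

lemma isCompact_hypo : IsCompact hypo := by
  refine (isCompact_univ.prod isCompact_Icc).of_isClosed_subset ?_ hypo_subset
  have : hypo = {z | 0 ≤ z.2} ∩ ⋂ N, {z | z.2 ≤ max 0 (1 - oddSum z.1 N)} := by
    ext z; simp [hypo]
  rw [this]
  refine (isClosed_le continuous_const continuous_snd).inter (isClosed_iInter fun N => ?_)
  have := continuous_oddSum N
  exact isClosed_le continuous_snd (by fun_prop)

lemma mem_hypo_of_le {a : ℕ → Bool} {s t : ℝ} (h : (a, s) ∈ hypo) (ht : 0 ≤ t) (hts : t ≤ s) :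
    (a, t) ∈ hypo :=
  ⟨ht, fun N => hts.trans (h.2 N)⟩

/-- A blade all of whose odd digits vanish is not truncated. -/
lemma mem_hypo_of_odd {a : ℕ → Bool} {s : ℝ} (ha : ∀ k, a (2 * k + 1) = false)
    (h : s ∈ Icc (0 : ℝ) 1) : (a, s) ∈ hypo :=
  ⟨h.1, fun N => by simp [oddSum, ha, h.2]⟩

lemma fanPt_zero (a : ℕ → Bool) : fanPt (a, 0) = 0 := by simp [fanPt]

lemma isCompact_lelek : IsCompact lelek := isCompact_hypo.image continuous_fanPt

lemma zero_mem_lelek : (0 : ℝ × ℝ) ∈ lelek :=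
  ⟨(fun _ => false, 0), mem_hypo_of_odd (fun _ => rfl) (by simp), fanPt_zero _⟩

lemma starConvex_lelek : StarConvex ℝ 0 lelek := by
  rw [starConvex_zero_iff]
  rintro _ ⟨⟨a, s⟩, h, rfl⟩ r hr0 hr1
  refine ⟨(a, r * s), mem_hypo_of_le h (mul_nonneg hr0 h.1) (mul_le_of_le_one_left h.1 hr1), ?_⟩
  simp [fanPt, mul_assoc]

lemma isSubcontinuum_lelek : IsSubcontinuum lelek cantorFan :=
  ⟨by rw [cantorFan_eq_image]; exact image_mono hypo_subset, ⟨0, zero_mem_lelek⟩,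
    isCompact_lelek, (starConvex_lelek.isPathConnected zero_mem_lelek).isConnected⟩

/-! ### End-points -/

/-- The tip of a nondegenerate blade is an end-point: an arc having it in its interior would stay,
near that point, on one blade because the Cantor set is totally disconnected, and the height along
the arc would then be an injective continuous function with an interior maximum. -/
lemma fanPt_mem_endpointSet {a : ℕ → Bool} {s : ℝ} (h : (a, s) ∈ hypo) (hs : 0 < s)
    (hmax : ∀ t, (a, t) ∈ hypo → t ≤ s) : fanPt (a, s) ∈ endpointSet lelek := by
  refine ⟨⟨_, h, rfl⟩, ?_⟩
  rintro A hA ⟨e⟩ hp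
  obtain ⟨⟨u, hu⟩, heu⟩ := e.symm.surjective ⟨_, hp⟩
  have heu' : (e.symm ⟨u, hu⟩ : ℝ × ℝ) = fanPt (a, s) := by rw [heu]
  refine ⟨e.symm, ?_⟩
  by_contra! hcon
  have hu0 : 0 < u := by
    refine lt_of_le_of_ne hu.1 ?_
    rintro rfl
    exact hcon.1 heu'
  have hu1 : u < 1 := by
    refine lt_of_le_of_ne hu.2 ?_
    rintro rfl
    exact hcon.2 heu'
  let g : ℝ → ℝ × ℝ := fun v => e.symm (projIcc 0 1 zero_le_one v)
  have hgc : Continuous g :=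
    continuous_subtype_val.comp (e.symm.continuous.comp continuous_projIcc)
  have hgi : InjOn g (Icc 0 1) := by
    intro v hv w hw hvw
    have := e.symm.injective (Subtype.val_injective hvw)
    rw [projIcc_of_mem _ hv, projIcc_of_mem _ hw] at this
    exact congrArg Subtype.val this
  have hgu : g u = fanPt (a, s) := by
    simp only [g]
    rw [projIcc_of_mem zero_le_one hu, heu']
  have hopen : IsOpen (Ioo 0 1 ∩ {v | (g v).2 < 0}) :=
    isOpen_Ioo.inter (isOpen_lt (by fun_prop) continuous_const)
  obtain ⟨r, hr, hball⟩ := Metric.isOpen_iff.1 hopen u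
    ⟨⟨hu0, hu1⟩, by simp [hgu, fanPt, hs]⟩
  -- a closed interval around `u` on which the arc avoids the vertex
  set J := Icc (u - r / 2) (u + r / 2)
  have hJ : ∀ v ∈ J, v ∈ Icc (0 : ℝ) 1 ∧ (g v).2 < 0 := by
    intro v hv
    have : v ∈ Metric.ball u r := by
      rw [Metric.mem_ball, Real.dist_eq, abs_lt]
      constructor <;> linarith [hv.1, hv.2]
    exact ⟨Ioo_subset_Icc_self (hball this).1, (hball this).2⟩
  have huJ : u ∈ J := ⟨by linarith, by linarith⟩
  have hform : ∀ v ∈ J, ∃ b t, (b, t) ∈ hypo ∧ 0 < t ∧ g v = fanPt (b, t) := by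
    intro v hv
    obtain ⟨⟨b, t⟩, hbt, hv'⟩ := hA (e.symm (projIcc 0 1 zero_le_one v)).2
    have h2 := (hJ v hv).2
    rw [show g v = fanPt (b, t) from hv'.symm] at h2
    exact ⟨b, t, hbt, by simpa [fanPt] using h2, hv'.symm⟩
  let κ : ℝ → ℝ := fun v => (g v).1 / -(g v).2
  have hκ : ∀ {v b t}, 0 < t → g v = fanPt (b, t) → κ v = cantorPt b := by
    intro v b t ht hv
    simp [κ, hv, fanPt, ht.ne']
  have hκc : ContinuousOn κ J :=
    (continuous_fst.comp hgc).continuousOn.div (continuous_snd.comp hgc).neg.continuousOn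
      fun v hv => (neg_pos.2 (hJ v hv).2).ne'
  have hsub : (κ '' J).Subsingleton := by
    refine isTotallyDisconnected_cantorSet _ ?_ (isPreconnected_Icc.image _ hκc)
    rintro _ ⟨v, hv, rfl⟩
    obtain ⟨b, t, -, ht, hbt⟩ := hform v hv
    exact hκ ht hbt ▸ cantorPt_mem b
  have hblade : ∀ v ∈ J, ∃ t ≤ s, g v = fanPt (a, t) := by
    intro v hv
    obtain ⟨b, t, hH, ht, hbt⟩ := hform v hv
    have := hsub ⟨v, hv, rfl⟩ ⟨u, huJ, rfl⟩
    rw [hκ ht hbt, hκ hs hgu] at this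
    obtain rfl := cantorPt_injective this
    exact ⟨t, hmax t hH, hbt⟩
  let τ : ℝ → ℝ := fun v => -(g v).2
  have hτi : InjOn τ J := by
    intro v hv w hw hvw
    obtain ⟨t, -, ht⟩ := hblade v hv
    obtain ⟨t', -, ht'⟩ := hblade w hw
    have : t = t' := by simpa [τ, ht, ht', fanPt] using hvw
    exact hgi (hJ v hv).1 (hJ w hw).1 (by rw [ht, ht', this])
  have hτm : ∀ v ∈ J, τ v ≤ τ u := by
    intro v hv
    obtain ⟨t, hts, ht⟩ := hblade v hv
    simpa [τ, ht, hgu, fanPt] using hts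
  have hl : u - r / 2 ∈ J := ⟨le_rfl, by linarith⟩
  have hr' : u + r / 2 ∈ J := ⟨by linarith, le_rfl⟩
  rcases ContinuousOn.strictMonoOn_of_injOn_Icc' (by linarith)
    (continuous_snd.comp hgc).neg.continuousOn hτi with hm | hm
  · exact (hm huJ hr' (by linarith)).not_ge (hτm _ hr')
  · exact (hm hl huJ (by linarith)).not_ge (hτm _ hl)

/-! ### Density of the end-points -/

/-- Block sums of the harmonic series starting at `n` approximate every `δ ≥ 0` from below with
error less than `1 / (n + 1)`, by divergence. -/
lemma exists_block_sum (n : ℕ) {δ : ℝ} (hδ : 0 ≤ δ) :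
    ∃ M, n ≤ M ∧ ∑ k ∈ Finset.Ico n M, (1 : ℝ) / (k + 1) ≤ δ ∧
      δ < ∑ k ∈ Finset.Ico n M, (1 : ℝ) / (k + 1) + 1 / (n + 1) := by
  have hex : ∃ j, δ < ∑ k ∈ Finset.Ico n (n + j), (1 : ℝ) / (k + 1) := by
    obtain ⟨M, hM, hnM⟩ := ((Real.tendsto_sum_range_one_div_nat_succ_atTop.eventually_gt_atTop
      (δ + ∑ k ∈ Finset.range n, (1 : ℝ) / (k + 1))).and (Filter.eventually_ge_atTop n)).exists
    refine ⟨M - n, ?_⟩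
    rw [Nat.add_sub_cancel' hnM, Finset.sum_Ico_eq_sub _ hnM]
    linarith
  classical
  obtain ⟨j, hj⟩ : ∃ j, Nat.find hex = j + 1 := by
    refine Nat.exists_eq_succ_of_ne_zero fun h0 => ?_
    have := Nat.find_spec hex
    rw [h0] at this
    simp at this
    linarith
  have h1 := Nat.find_spec hex
  have h2 := Nat.find_min hex (m := j) (by omega)
  rw [hj, ← add_assoc, Finset.sum_Ico_succ_top (by omega)] at h1
  refine ⟨n + j, by omega, not_lt.1 h2, h1.trans_le ?_⟩
  gcongr
  omega

/-- Every point of `hypo` at positive height is approximated by tips of blades: keep the first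
`2 * n` digits of `a` and follow them by a finite block of odd digits `true` that shortens the blade
to the required length. -/
lemma exists_tip_near {a : ℕ → Bool} {s : ℝ} (h : (a, s) ∈ hypo) (hs : 0 < s) (n : ℕ) :
    ∃ b t, (∀ j < 2 * n, b j = a j) ∧ s ≤ t ∧ t ≤ s + 1 / (n + 1) ∧
      fanPt (b, t) ∈ endpointSet lelek := by
  have hsn : s ≤ 1 - oddSum a n := by
    rcases le_max_iff.1 (h.2 n) with h' | h'
    · exact absurd hs h'.not_gt
    · exact h'
  obtain ⟨M, hnM, hM1, hM2⟩ := exists_block_sum n (δ := 1 - oddSum a n - s) (by linarith)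
  let b : ℕ → Bool := fun j => if j < 2 * n then a j else decide (j % 2 = 1 ∧ j / 2 < M)
  have hbM : oddSum b M = oddSum a n + ∑ k ∈ Finset.Ico n M, (1 : ℝ) / (k + 1) := by
    unfold oddSum
    rw [← Finset.sum_range_add_sum_Ico _ hnM]
    congr 1
    · refine Finset.sum_congr rfl fun k hk => ?_
      have hk := Finset.mem_range.1 hk
      have : b (2 * k + 1) = a (2 * k + 1) := if_pos (by omega)
      rw [this]
    · refine Finset.sum_congr rfl fun k hk => ?_
      have hk := Finset.mem_Ico.1 hk
      have : b (2 * k + 1) = true := by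
        simp only [b]
        rw [if_neg (by omega), decide_eq_true_iff]
        omega
      rw [if_pos this]
  have hbN : ∀ N, oddSum b N ≤ oddSum b M := by
    intro N
    refine (oddSum_mono b (le_max_right M N)).trans (le_of_eq ?_)
    unfold oddSum
    rw [← Finset.sum_range_add_sum_Ico _ (le_max_left M N), add_eq_left]
    refine Finset.sum_eq_zero fun k hk => ?_
    have hk := Finset.mem_Ico.1 hk
    have : b (2 * k + 1) = false := by
      simp only [b]
      rw [if_neg (by omega), decide_eq_false_iff_not]
      omega
    simp [this]
  refine ⟨b, 1 - oddSum b M, fun j hj => if_pos hj, by linarith, by linarith, ?_⟩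
  refine fanPt_mem_endpointSet ⟨by simp only; linarith, fun N => ?_⟩ (by linarith) fun t ht => ?_
  · exact le_max_of_le_right (by simp only; linarith [hbN N])
  · have := ht.2 M
    rwa [max_eq_right (by simp only; linarith)] at this

lemma fanPt_mem_closure {a : ℕ → Bool} {s : ℝ} (h : (a, s) ∈ hypo) (hs : 0 < s) :
    fanPt (a, s) ∈ closure (endpointSet lelek) := by
  choose b t hb ht1 ht2 hE using exists_tip_near h hs
  refine mem_closure_of_tendsto (b := Filter.atTop) (f := fun n => fanPt (b n, t n)) ?_
    (Filter.Eventually.of_forall hE)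
  refine (continuous_fanPt.tendsto (a, s)).comp (Filter.Tendsto.prodMk_nhds ?_ ?_)
  · rw [tendsto_pi_nhds]
    intro j
    refine tendsto_const_nhds.congr' ?_
    filter_upwards [Filter.eventually_gt_atTop j] with n hn
    exact (hb n j (by omega)).symm
  · refine tendsto_of_tendsto_of_tendsto_of_le_of_le tendsto_const_nhds ?_ ht1 ht2
    simpa using tendsto_one_div_add_atTop_nhds_zero_nat (𝕜 := ℝ) |>.const_add s

lemma closure_endpointSet_lelek : closure (endpointSet lelek) = lelek := by
  refine (closure_minimal (fun x hx => hx.1) isCompact_lelek.isClosed).antisymm ?_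
  rintro _ ⟨⟨a, s⟩, h, rfl⟩
  rcases h.1.eq_or_lt with hs | hs
  · -- the vertex is the limit of points at positive height on an untruncated blade
    obtain rfl : 0 = s := hs
    have hlim := (continuous_fanPt.tendsto ((fun _ => false), 0)).comp
      (tendsto_const_nhds.prodMk_nhds (tendsto_one_div_add_atTop_nhds_zero_nat (𝕜 := ℝ)))
    rw [fanPt_zero] at hlim ⊢
    refine isClosed_closure.mem_of_tendsto hlim (Filter.Eventually.of_forall fun n => ?_)
    have hn : (0 : ℝ) < 1 / ((n : ℝ) + 1) := by positivity
    refine fanPt_mem_closure (mem_hypo_of_odd (fun _ => rfl) ⟨hn.le, ?_⟩) hn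
    rw [div_le_one (by positivity)]
    linarith [n.cast_nonneg (α := ℝ)]
  · exact fanPt_mem_closure h hs

lemma isLelekFan_lelek : IsLelekFan lelek := by
  refine ⟨isSubcontinuum_lelek, ⟨0, zero_mem_lelek, fanPt (fun _ => false, 1),
    ⟨_, mem_hypo_of_odd (fun _ => rfl) (by simp), rfl⟩, fun h => ?_⟩, closure_endpointSet_lelek⟩
  simpa [fanPt] using congrArg Prod.snd h

/-! ### The embedding -/

/-- A continuous surjection and a continuous map from a compact space that identify the same points
induce an embedding between their Hausdorff targets. -/
lemma exists_isEmbedding_of_same_fibers {X A B : Type*} [TopologicalSpace X] [CompactSpace X]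
    [TopologicalSpace A] [T2Space A] [TopologicalSpace B] [T2Space B] {q : X → A} {F : X → B}
    (hq : Continuous q) (hF : Continuous F) (hsurj : Function.Surjective q)
    (h : ∀ z w, q z = q w ↔ F z = F w) : ∃ f : A → B, IsEmbedding f := by
  have hfq : (F ∘ Function.surjInv hsurj) ∘ q = F :=
    funext fun z => (h _ _).1 (Function.surjInv_eq hsurj (q z))
  have hQ : IsQuotientMap q := .of_surjective_continuous hsurj hq
  have hc : Continuous (F ∘ Function.surjInv hsurj) := by
    rw [hQ.continuous_iff, hfq]
    exact hF
  have : CompactSpace A := hsurj.compactSpace hq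
  refine ⟨_, (hc.isClosedEmbedding fun x y hxy => ?_).isEmbedding⟩
  rw [← Function.surjInv_eq hsurj x, ← Function.surjInv_eq hsurj y]
  exact (h _ _).2 hxy

/-- The sequence with the terms of `a` at even places and `false` at odd places. -/
def spread (a : ℕ → Bool) (j : ℕ) : Bool := decide (j % 2 = 0) && a (j / 2)

lemma continuous_spread : Continuous spread :=
  continuous_pi fun j => (continuous_of_discreteTopology
    (f := fun b : Bool => decide (j % 2 = 0) && b)).comp (continuous_apply (j / 2))

lemma spread_injective : Function.Injective spread := by
  intro a b h
  funext j
  simpa [spread] using congrFun h (2 * j)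

lemma spread_odd (a : ℕ → Bool) (k : ℕ) : spread a (2 * k + 1) = false := by
  simp [spread]

/-- There exist a Lelek fan `Y` (a non-degenerate subcontinuum of the Cantor
fan with `Cl(E(Y)) = Y`) and a topological embedding of the Cantor fan into `Y`. -/
theorem cantorFan_embeds_into_lelekFan :
    ∃ Y : Set (ℝ × ℝ), IsLelekFan Y ∧ ∃ f : ↥cantorFan → ↥Y, Topology.IsEmbedding f := by
  refine ⟨lelek, isLelekFan_lelek, ?_⟩
  let q : (ℕ → Bool) × Icc (0 : ℝ) 1 → cantorFan := fun z =>
    ⟨fanPt (z.1, z.2), by rw [cantorFan_eq_image]; exact ⟨_, ⟨trivial, z.2.2⟩, rfl⟩⟩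
  let F : (ℕ → Bool) × Icc (0 : ℝ) 1 → lelek := fun z =>
    ⟨fanPt (spread z.1, z.2), ⟨_, mem_hypo_of_odd (spread_odd z.1) z.2.2, rfl⟩⟩
  have := continuous_spread
  have := continuous_fanPt
  refine exists_isEmbedding_of_same_fibers (q := q) (F := F) ?_ ?_ ?_ ?_
  · exact Continuous.subtype_mk (by fun_prop) _
  · exact Continuous.subtype_mk (by fun_prop) _
  · rintro ⟨p, hp⟩
    obtain ⟨⟨a, s⟩, hs, rfl⟩ := cantorFan_eq_image ▸ hp
    exact ⟨(a, ⟨s, hs.2⟩), rfl⟩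
  · intro z w
    simp only [q, F, Subtype.ext_iff, fanPt_eq_iff, spread_injective.eq_iff]
end
end

section
/- Let 0 < r < 1 and let G = L_r ∪ {(t,t) | t ∈ [0,1]}. Then the Mahavier product X_G^+ is a Cantor fan, i.e., X_G^+ is homeomorphic to the Cantor fan C. -/
/-!
Both spaces are the cone over the Cantor space `ℕ → Bool`. A point of the Mahavier product is
`(t, w₀ t, w₁ w₀ t, …)` for a starting value `t ∈ [0,1]` and a sequence of slopes `wᵢ ∈ {1, r}`,
and a point of the Cantor fan is `(t c, -t)` with `t ∈ [0,1]` and `c` in the Cantor set. Each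
description is a continuous surjection from the compact space `[0,1] × (ℕ → Bool)` onto a
Hausdorff space, and in each case two parameters `(t, a)`, `(s, b)` have the same image exactly when
`t = s` and either `t = 0` or `a = b` (`conePath_eq_iff`, `coneFan_eq_iff`). A continuous surjection
from a compact space onto a Hausdorff space is a quotient map, so the two images are homeomorphic
(`nonempty_homeomorph_of_same_fibres`).
-/


open Set Topology

noncomputable section

/-- Two Hausdorff images of one compact space under continuous maps with the same fibres are
homeomorphic. -/
theorem nonempty_homeomorph_of_same_fibres {Z X Y : Type*} [TopologicalSpace Z] [CompactSpace Z]
    [TopologicalSpace X] [T2Space X] [TopologicalSpace Y] [T2Space Y] {S : Set X} {T : Set Y}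
    (f : Z → X) (g : Z → Y) (hf : Continuous f) (hg : Continuous g)
    (hS : range f = S) (hT : range g = T) (h : ∀ a b, f a = f b ↔ g a = g b) :
    Nonempty (S ≃ₜ T) := by
  subst hS hT
  let f' : C(Z, range f) := ⟨rangeFactorization f, by fun_prop⟩
  let g' : C(Z, range g) := ⟨rangeFactorization g, by fun_prop⟩
  have qf : IsQuotientMap f' :=
    IsQuotientMap.of_surjective_continuous rangeFactorization_surjective f'.continuous
  have qg : IsQuotientMap g' :=
    IsQuotientMap.of_surjective_continuous rangeFactorization_surjective g'.continuous
  have hker : Setoid.ker f' = Setoid.ker g' := by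
    ext a b
    simpa [f', g', Setoid.ker_def, rangeFactorization, Subtype.ext_iff] using h a b
  have e := qf.homeomorph
  rw [hker] at e
  exact ⟨e.symm.trans qg.homeomorph⟩

/-- The slope of one step: `r` (the line `L_r`) or `1` (the diagonal). -/
def stepSlope (r : ℝ) (b : Bool) : ℝ := if b then r else 1

theorem stepSlope_pos {r : ℝ} (hr : 0 < r) (b : Bool) : 0 < stepSlope r b := by
  cases b <;> simp [stepSlope, hr]

theorem stepSlope_le_one {r : ℝ} (hr1 : r < 1) (b : Bool) : stepSlope r b ≤ 1 := by
  cases b <;> simp [stepSlope, hr1.le]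

theorem stepSlope_injective {r : ℝ} (hr1 : r < 1) : Function.Injective (stepSlope r) := by
  intro a b h
  cases a <;> cases b <;> simp [stepSlope] at h ⊢ <;> linarith

/-- The cone over the Cantor space mapped to orbits: start at `t` and multiply in step `i` by the
slope encoded by the `i`-th bit. -/
def conePath (r : ℝ) (p : unitInterval × (ℕ → Bool)) : ℕ → ℝ :=
  fun n => (∏ i ∈ Finset.range n, stepSlope r (p.2 i)) * p.1

/-- The cone over the Cantor space mapped to the Cantor fan: the point at height `-t` on the segment
whose end is the point of the Cantor set encoded by the bits. -/
def coneFan (p : unitInterval × (ℕ → Bool)) : ℝ × ℝ :=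
  ((p.1 : ℝ) * (cantorSetHomeomorphNatToBool.symm p.2 : ℝ), -(p.1 : ℝ))

theorem conePath_zero (r : ℝ) (p : unitInterval × (ℕ → Bool)) : conePath r p 0 = p.1 := by
  simp [conePath]

theorem conePath_succ (r : ℝ) (p : unitInterval × (ℕ → Bool)) (n : ℕ) :
    conePath r p (n + 1) = stepSlope r (p.2 n) * conePath r p n := by
  simp only [conePath, Finset.prod_range_succ]
  ring

theorem continuous_conePath (r : ℝ) : Continuous (conePath r) := by
  have hw : Continuous (stepSlope r) := continuous_of_discreteTopology
  unfold conePath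
  fun_prop

theorem continuous_coneFan : Continuous coneFan := by
  unfold coneFan
  fun_prop

theorem range_conePath {r : ℝ} (hr : 0 < r) (hr1 : r < 1) :
    range (conePath r) = mahavier (lineL r ∪ unitDiag) := by
  classical
  ext x
  constructor
  · rintro ⟨p, rfl⟩
    have hmem : ∀ k, conePath r p k ∈ Icc (0 : ℝ) 1 := by
      intro k
      have h0 : 0 ≤ ∏ i ∈ Finset.range k, stepSlope r (p.2 i) :=
        Finset.prod_nonneg fun i _ => (stepSlope_pos hr _).le
      have h1 : ∏ i ∈ Finset.range k, stepSlope r (p.2 i) ≤ 1 :=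
        Finset.prod_le_one (fun i _ => (stepSlope_pos hr _).le) fun i _ => stepSlope_le_one hr1 _
      exact ⟨mul_nonneg h0 p.1.2.1, mul_le_one₀ h1 p.1.2.1 p.1.2.2⟩
    refine ⟨hmem, fun k => ?_⟩
    cases hb : p.2 k
    · exact Or.inr ⟨hmem k, by simp [conePath_succ, hb, stepSlope]⟩
    · exact Or.inl ⟨hmem k, hmem (k + 1), by simp [conePath_succ, hb, stepSlope]⟩
  · rintro ⟨hmem, hstep⟩
    refine ⟨(⟨x 0, hmem 0⟩, fun i => decide (x (i + 1) = r * x i)), funext fun n => ?_⟩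
    induction n with
    | zero => simp [conePath_zero]
    | succ n ih =>
      rw [conePath_succ, ih]
      by_cases h : x (n + 1) = r * x n
      · simp [stepSlope, h]
      · rcases hstep n with h' | h'
        · exact absurd h'.2.2 h
        · simpa [stepSlope, h] using h'.2.symm

theorem range_coneFan : range coneFan = cantorFan := by
  ext x
  simp only [cantorFan, mem_range, mem_iUnion, segment_eq_image, mem_image, exists_prop]
  constructor
  · rintro ⟨p, rfl⟩
    exact ⟨_, (cantorSetHomeomorphNatToBool.symm p.2).2, p.1, p.1.2, by simp [coneFan]⟩
  · rintro ⟨c, hc, t, ht, rfl⟩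
    exact ⟨(⟨t, ht⟩, cantorSetHomeomorphNatToBool ⟨c, hc⟩), by simp [coneFan]⟩

theorem conePath_eq_iff {r : ℝ} (hr : 0 < r) (hr1 : r < 1) (p q : unitInterval × (ℕ → Bool)) :
    conePath r p = conePath r q ↔ p.1 = q.1 ∧ ((p.1 : ℝ) = 0 ∨ p.2 = q.2) := by
  constructor
  · intro h
    have h0 : p.1 = q.1 := Subtype.ext (by simpa [conePath_zero] using congrFun h 0)
    refine ⟨h0, or_iff_not_imp_left.2 fun hp => funext fun n => stepSlope_injective hr1 ?_⟩
    have hn : conePath r q n ≠ 0 := by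
      rw [← h]
      exact mul_ne_zero (Finset.prod_ne_zero_iff.2 fun i _ => (stepSlope_pos hr _).ne') hp
    have hs := congrFun h (n + 1)
    rw [conePath_succ, conePath_succ, h] at hs
    exact mul_right_cancel₀ hn hs
  · rintro ⟨h, h0 | h'⟩
    · funext n
      simp [conePath, ← h, h0]
    · rw [Prod.ext h h']

theorem coneFan_eq_iff (p q : unitInterval × (ℕ → Bool)) :
    coneFan p = coneFan q ↔ p.1 = q.1 ∧ ((p.1 : ℝ) = 0 ∨ p.2 = q.2) := by
  constructor
  · intro h
    have h0 : p.1 = q.1 := Subtype.ext (neg_injective (congrArg Prod.snd h))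
    refine ⟨h0, or_iff_not_imp_left.2 fun hp => ?_⟩
    have h1 := congrArg Prod.fst h
    simp only [coneFan, ← h0] at h1
    exact cantorSetHomeomorphNatToBool.symm.injective (Subtype.ext (mul_left_cancel₀ hp h1))
  · rintro ⟨h, h0 | h'⟩
    · simp [coneFan, ← h, h0]
    · rw [Prod.ext h h']

/-- For `0 < r < 1` and `G = L_r ∪ {(t,t) | t ∈ [0,1]}`, the Mahavier product
`X_G⁺` is a Cantor fan. -/
theorem mahavier_lineL_union_diag_isCantorFan (r : ℝ) (hr : 0 < r) (hr1 : r < 1) :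
    Nonempty (↥(mahavier (lineL r ∪ unitDiag)) ≃ₜ ↥cantorFan) := by
  exact nonempty_homeomorph_of_same_fibres (conePath r) coneFan (continuous_conePath r)
    continuous_coneFan (range_conePath hr hr1) range_coneFan fun p q =>
      (conePath_eq_iff hr hr1 p q).trans (coneFan_eq_iff p q).symm
end
end

section
/- Let (r,ρ) ∈ NC and let 𝐱 ∈ M_{r,ρ}. Then 𝐱 is an end-point of the continuum M_{r,ρ} if and only if sup{π_n(𝐱) | n a positive integer} = 1, where π_n denotes the n-th coordinate projection. -/
/-!
Away from the origin, the fan `M = mahavier (lineL r ∪ lineL ρ)` splits into half-open segments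
`{t • p | 0 < t ≤ T}`, at most one for each sequence of slopes in `{r, ρ}`: a continuous path in `M` that
avoids the origin cannot change its slopes, because each ratio `x (k + 1) / x k` is a continuous
function with values in the discrete set `{r, ρ}` (`path_proportional`).

If `⨆ n, x n = 1`, then `x` is the outermost point of its segment. Were `x` interior to an arc, the
coordinate `x 0` along the arc would be continuous and injective near `x` with a maximum at an
interior point, which is impossible (`not_injOn_of_max`).

If `⨆ n, x n < 1`, then `x` is interior to an arc: for `x ≠ 0` the arc is `t • x` with
`0 ≤ t ≤ 1 / ⨆ n, x n`, and for `x = 0` it is the union of two segments with different slope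
sequences. Being interior does not depend on the parametrization, since a homeomorphism of `[0,1]`
is strictly increasing or strictly decreasing (`not_endpoint_of_path`).
-/

open Set Topology

noncomputable section

/-! ### Coordinates in the fan -/

lemma mem_fan_iff {r ρ : ℝ} {x : ℕ → ℝ} : x ∈ mahavier (lineL r ∪ lineL ρ) ↔
    (∀ k, x k ∈ Icc (0 : ℝ) 1) ∧ ∀ k, x (k + 1) = r * x k ∨ x (k + 1) = ρ * x k := by
  constructor
  · rintro ⟨h1, h2⟩
    exact ⟨h1, fun k => (h2 k).imp (fun h => h.2.2) (fun h => h.2.2)⟩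
  · rintro ⟨h1, h2⟩
    exact ⟨h1, fun k => (h2 k).imp (fun h => ⟨h1 _, h1 _, h⟩) (fun h => ⟨h1 _, h1 _, h⟩)⟩

lemma smul_mem_fan {r ρ : ℝ} {x : ℕ → ℝ} (hx : x ∈ mahavier (lineL r ∪ lineL ρ)) {t : ℝ}
    (ht : 0 ≤ t) (h1 : ∀ n, t * x n ≤ 1) : t • x ∈ mahavier (lineL r ∪ lineL ρ) := by
  rw [mem_fan_iff] at hx ⊢
  refine ⟨fun k => ⟨mul_nonneg ht (hx.1 k).1, h1 k⟩, fun k => ?_⟩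
  simp only [Pi.smul_apply, smul_eq_mul]
  refine (hx.2 k).imp (fun h => ?_) (fun h => ?_) <;> rw [h] <;> ring

lemma fan_pos {r ρ : ℝ} (hr : 0 < r) (hρ : 0 < ρ) {x : ℕ → ℝ}
    (hx : x ∈ mahavier (lineL r ∪ lineL ρ)) (h0 : 0 < x 0) (n : ℕ) : 0 < x n := by
  rw [mem_fan_iff] at hx
  induction n with
  | zero => exact h0
  | succ n ih => rcases hx.2 n with h | h <;> rw [h] <;> positivity

lemma fan_eq_zero {r ρ : ℝ} {x : ℕ → ℝ}
    (hx : x ∈ mahavier (lineL r ∪ lineL ρ)) (h0 : x 0 = 0) : x = 0 := by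
  rw [mem_fan_iff] at hx
  funext n
  induction n with
  | zero => exact h0
  | succ n ih => rcases hx.2 n with h | h <;> rw [h, ih] <;> simp

/-! ### Arcs and continuous functions on the unit interval -/

/-- An interior value of an injective path in `Y` is not an end-point of `Y`. -/
lemma not_endpoint_of_path {X : Type*} [TopologicalSpace X] [T2Space X] {Y : Set X}
    {γ : unitInterval → X} (hc : Continuous γ) (hi : Function.Injective γ) (hY : ∀ t, γ t ∈ Y)
    {c : unitInterval} (h0 : c ≠ 0) (h1 : c ≠ 1) : γ c ∉ endpointSet Y := by
  intro hE
  let e : unitInterval ≃ₜ range γ := (hc.isClosedEmbedding hi).isEmbedding.toHomeomorph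
  obtain ⟨h, hh⟩ := hE.2 (range γ) (by rintro _ ⟨t, rfl⟩; exact hY t) ⟨e.symm⟩ ⟨c, rfl⟩
  -- the change of parametrization would send `0` or `1` to `c`
  let φ : unitInterval ≃ₜ unitInterval := h.trans e.symm
  have key : ∀ t, (h t : X) = γ c → φ t = c := by
    intro t ht
    have : h t = e c := Subtype.ext ht
    simp [φ, this]
  have htop : (⊤ : unitInterval) = 1 := rfl
  have hbot : (⊥ : unitInterval) = 0 := rfl
  rcases φ.continuous.strictMono_of_inj φ.injective with hm | hm
  · have b0 : φ 0 = 0 := (hm.orderIsoOfSurjective _ φ.surjective).map_bot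
    have b1 : φ 1 = 1 := (hm.orderIsoOfSurjective _ φ.surjective).map_top
    rcases hh with hh | hh
    · exact h0 ((key 0 hh).symm.trans b0)
    · exact h1 ((key 1 hh).symm.trans b1)
  · have b0 : φ 0 = 1 := by
      obtain ⟨t, ht⟩ := φ.surjective 1
      exact le_antisymm unitInterval.le_one' (ht ▸ hm.antitone unitInterval.nonneg')
    have b1 : φ 1 = 0 := by
      obtain ⟨t, ht⟩ := φ.surjective 0
      exact le_antisymm (ht ▸ hm.antitone unitInterval.le_one') unitInterval.nonneg'
    rcases hh with hh | hh
    · exact h1 ((key 0 hh).symm.trans b0)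
    · exact h0 ((key 1 hh).symm.trans b1)

/-- Near an interior maximum, the larger of two values taken on opposite sides is, by the
intermediate value theorem, also taken on the other side. -/
lemma not_injOn_of_max {g : unitInterval → ℝ} (hg : Continuous g) {a s b : unitInterval}
    (ha : a < s) (hb : s < b) (hmax : ∀ t ∈ Ioo a b, g t ≤ g s) : ¬ InjOn g (Ioo a b) := by
  intro hi
  obtain ⟨u, hu1, hu2⟩ := exists_between ha
  obtain ⟨v, hv1, hv2⟩ := exists_between hb
  have hs : s ∈ Ioo a b := ⟨ha, hb⟩
  have hu : u ∈ Ioo a b := ⟨hu1, hu2.trans hb⟩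
  have hv : v ∈ Ioo a b := ⟨ha.trans hv1, hv2⟩
  rcases le_total (g u) (g v) with hle | hle
  · obtain ⟨w, hw, hwv⟩ := intermediate_value_Icc hu2.le hg.continuousOn ⟨hle, hmax v hv⟩
    have hwJ : w ∈ Ioo a b := ⟨hu1.trans_le hw.1, hw.2.trans_lt hb⟩
    exact absurd (hi hwJ hv hwv) (hw.2.trans_lt hv1).ne
  · obtain ⟨w, hw, hwv⟩ := intermediate_value_Icc' hv1.le hg.continuousOn ⟨hle, hmax u hu⟩
    have hwJ : w ∈ Ioo a b := ⟨ha.trans_le hw.1, hw.2.trans_lt hv2⟩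
    exact absurd (hi hwJ hu hwv) (hu2.trans_le hw.1).ne'

/-! ### Paths in the fan and outermost points -/

/-- A path in the fan which avoids the origin on a connected set `J` stays there on a single ray
from the origin. -/
lemma path_proportional {r ρ : ℝ} (hr : 0 < r) (hρ : 0 < ρ) {f : unitInterval → ℕ → ℝ}
    (hf : Continuous f) (hM : ∀ t, f t ∈ mahavier (lineL r ∪ lineL ρ)) {J : Set unitInterval}
    (hJ : IsPreconnected J) (hpos : ∀ t ∈ J, 0 < f t 0) {s t : unitInterval} (hs : s ∈ J)
    (ht : t ∈ J) (n : ℕ) : f t n = (f t 0 / f s 0) * f s n := by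
  have hfn : ∀ n, Continuous fun t => f t n := fun n => (continuous_apply n).comp hf
  have hp : ∀ t ∈ J, ∀ n, 0 < f t n := fun t ht n => fan_pos hr hρ (hM t) (hpos t ht) n
  induction n with
  | zero => rw [div_mul_cancel₀ _ (hpos s hs).ne']
  | succ n ih =>
    have hcont : ContinuousOn (fun t => f t (n + 1) / f t n) J :=
      (hfn _).continuousOn.div (hfn _).continuousOn fun t ht => (hp t ht n).ne'
    have hmaps : MapsTo (fun t => f t (n + 1) / f t n) J ({r, ρ} : Set ℝ) := by
      intro t ht
      have := (hp t ht n).ne'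
      rcases (mem_fan_iff.1 (hM t)).2 n with h | h
      · left; simp only [h]; field_simp
      · right; simp only [h, mem_singleton_iff]; field_simp
    obtain ⟨y, -, hy⟩ := hJ.eqOn_const_of_mapsTo (Set.toFinite _).isDiscrete hcont hmaps ⟨r, by simp⟩
    have h1 : f t (n + 1) = y * f t n := (div_eq_iff (hp t ht n).ne').1 (hy ht)
    have h2 : f s (n + 1) = y * f s n := (div_eq_iff (hp s hs n).ne').1 (hy hs)
    rw [h1, h2, ih]
    ring

lemma endpoint_of_iSup_eq_one {r ρ : ℝ} (hr : 0 < r) (hρ : 0 < ρ) {x : ℕ → ℝ}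
    (hx : x ∈ mahavier (lineL r ∪ lineL ρ)) (hsup : (⨆ n, x n) = 1) :
    x ∈ endpointSet (mahavier (lineL r ∪ lineL ρ)) := by
  refine ⟨hx, ?_⟩
  rintro A hA ⟨e⟩ hxA
  set f : unitInterval → ℕ → ℝ := fun t => (e.symm t : ℕ → ℝ) with hf_def
  have hf : Continuous f := continuous_subtype_val.comp e.symm.continuous
  have hfi : Function.Injective f := Subtype.val_injective.comp e.symm.injective
  have hM : ∀ t, f t ∈ mahavier (lineL r ∪ lineL ρ) := fun t => hA (e.symm t).2
  set s := e ⟨x, hxA⟩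
  have hfs : f s = x := by simp [f, s]
  by_cases hs0 : s = 0
  · exact ⟨e.symm, Or.inl (by rw [← hs0]; exact hfs)⟩
  by_cases hs1 : s = 1
  · exact ⟨e.symm, Or.inr (by rw [← hs1]; exact hfs)⟩
  exfalso
  have hx0 : 0 < x 0 := by
    refine lt_of_le_of_ne (hx.1 0).1 fun h => ?_
    rw [fan_eq_zero hx h.symm] at hsup
    simp at hsup
  have hg : Continuous fun t => f t 0 := (continuous_apply 0).comp hf
  have hU : {t | 0 < f t 0} ∈ 𝓝 s :=
    (isOpen_lt continuous_const hg).mem_nhds (by simpa [hfs] using hx0)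
  obtain ⟨a, b, hab, hJ⟩ := (mem_nhds_iff_exists_Ioo_subset'
    ⟨0, unitInterval.pos_iff_ne_zero.2 hs0⟩ ⟨1, unitInterval.lt_one_iff_ne_one.2 hs1⟩).1 hU
  have hprop : ∀ t ∈ Ioo a b, ∀ n, f t n = (f t 0 / x 0) * x n := by
    intro t ht n
    have := path_proportional hr hρ hf hM isPreconnected_Ioo (fun t ht => hJ ht) hab ht n
    rwa [hfs] at this
  refine not_injOn_of_max hg hab.1 hab.2 ?_ ?_
  · intro t ht
    rw [hfs]
    by_contra! hlt
    have hc : 1 < f t 0 / x 0 := (one_lt_div hx0).2 hlt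
    -- every coordinate of `x` would then be at most `(f t 0 / x 0)⁻¹ < 1`
    have : (⨆ n, x n) ≤ (f t 0 / x 0)⁻¹ := ciSup_le fun n => by
      have h1 := ((hM t).1 n).2
      rw [hprop t ht n] at h1
      rwa [← one_div, le_div_iff₀ (by linarith), mul_comm]
    rw [hsup] at this
    exact absurd (inv_lt_one_of_one_lt₀ hc) (not_lt.2 this)
  · intro t ht u hu htu
    refine hfi (funext fun n => ?_)
    rw [hprop t ht n, hprop u hu n]
    simp only at htu
    rw [htu]

/-! ### Points interior to an arc -/

lemma zero_not_endpoint {r ρ : ℝ} (hr : 0 < r) (hr1 : r < 1) (hρ : 1 < ρ) :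
    (0 : ℕ → ℝ) ∉ endpointSet (mahavier (lineL r ∪ lineL ρ)) := by
  have hρ0 : 0 < ρ := by linarith
  -- the outermost points of the rays with slopes `r, r, r, …` and `ρ, r, r, …`
  let p : ℕ → ℝ := fun n => r ^ n
  let q : ℕ → ℝ := fun n => Nat.casesOn n ρ⁻¹ fun m => r ^ m
  have hp : p ∈ mahavier (lineL r ∪ lineL ρ) := mem_fan_iff.2
    ⟨fun k => ⟨by positivity, pow_le_one₀ hr.le hr1.le⟩, fun k => Or.inl (pow_succ' r k)⟩
  have hq : q ∈ mahavier (lineL r ∪ lineL ρ) := by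
    refine mem_fan_iff.2 ⟨fun k => ?_, fun k => ?_⟩
    · cases k with
      | zero => exact ⟨(inv_pos.2 hρ0).le, (inv_lt_one_of_one_lt₀ hρ).le⟩
      | succ m => exact ⟨(pow_pos hr m).le, pow_le_one₀ hr.le hr1.le⟩
    · cases k with
      | zero => right; simp [q, hρ0.ne']
      | succ m => left; exact pow_succ' r m
  let γ : unitInterval → ℕ → ℝ := fun t =>
    (max ((t : ℝ) - 1 / 2) 0) • p + (max (1 / 2 - (t : ℝ)) 0) • q
  have hc : Continuous γ := by fun_prop
  have hle : ∀ t : unitInterval, (t : ℝ) ≤ 1 / 2 → γ t = (1 / 2 - (t : ℝ)) • q := by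
    intro t ht
    simp only [γ]
    rw [max_eq_right (by linarith), max_eq_left (by linarith), zero_smul, zero_add]
  have hge : ∀ t : unitInterval, 1 / 2 ≤ (t : ℝ) → γ t = ((t : ℝ) - 1 / 2) • p := by
    intro t ht
    simp only [γ]
    rw [max_eq_left (by linarith), max_eq_right (by linarith), zero_smul, add_zero]
  have hi : Function.Injective γ := by
    intro t u htu
    have h0 := congrFun htu 0
    have h1 := congrFun htu 1
    have hinv : ρ⁻¹ < 1 := inv_lt_one_of_one_lt₀ hρ
    have hinv0 : 0 < ρ⁻¹ := inv_pos.2 hρ0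
    -- the two rays meet only at the origin, because `r * ρ⁻¹ < 1`
    have haux : ∀ {a b : ℝ}, 0 ≤ a → 0 ≤ b → a * ρ⁻¹ = b → a = b * r → a = 0 ∧ b = 0 := by
      intro a b ha hb h2 h3
      have hba : b ≤ a := h2 ▸ mul_le_of_le_one_right ha hinv.le
      have hb0 : b = 0 := by nlinarith
      exact ⟨by rw [h3, hb0, zero_mul], hb0⟩
    apply Subtype.ext
    rcases le_total (t : ℝ) (1 / 2) with ht | ht <;> rcases le_total (u : ℝ) (1 / 2) with hu | hu
    · rw [hle t ht, hle u hu] at h1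
      simp [q] at h1
      linarith
    · rw [hle t ht, hge u hu] at h0 h1
      simp [p, q] at h0 h1
      obtain ⟨h2, h3⟩ := haux (by linarith) (by linarith) h0 h1
      linarith
    · rw [hge t ht, hle u hu] at h0 h1
      simp [p, q] at h0 h1
      obtain ⟨h2, h3⟩ := haux (by linarith) (by linarith) h0.symm h1.symm
      linarith
    · rw [hge t ht, hge u hu] at h0
      simp [p] at h0
      linarith
  have hmem : ∀ t, γ t ∈ mahavier (lineL r ∪ lineL ρ) := by
    intro t
    have t0 := t.2.1
    have t1 := t.2.2
    rcases le_total (t : ℝ) (1 / 2) with ht | ht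
    · rw [hle t ht]
      exact smul_mem_fan hq (by linarith) fun n =>
        mul_le_one₀ (by linarith) (hq.1 n).1 (hq.1 n).2
    · rw [hge t ht]
      exact smul_mem_fan hp (by linarith) fun n =>
        mul_le_one₀ (by linarith) (hp.1 n).1 (hp.1 n).2
  let c : unitInterval := ⟨1 / 2, by norm_num, by norm_num⟩
  have hγc : γ c = 0 := by rw [hle c le_rfl]; simp [c]
  rw [← hγc]
  refine not_endpoint_of_path hc hi hmem ?_ ?_ <;> intro h <;>
    have := congrArg Subtype.val h <;> norm_num [c] at this

/-- A nonzero point whose coordinates stay below some `S < 1` can be pushed outwards along its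
ray. -/
lemma not_endpoint_of_lt_one {r ρ : ℝ} {x : ℕ → ℝ} (hx : x ∈ mahavier (lineL r ∪ lineL ρ))
    (hx0 : 0 < x 0) {S : ℝ} (hS : S < 1) (hxS : ∀ n, x n ≤ S) :
    x ∉ endpointSet (mahavier (lineL r ∪ lineL ρ)) := by
  have hS0 : 0 < S := hx0.trans_le (hxS 0)
  let γ : unitInterval → ℕ → ℝ := fun t => ((t : ℝ) / S) • x
  have hc : Continuous γ := by fun_prop
  have hi : Function.Injective γ := by
    intro t u htu
    have h0 := congrFun htu 0
    simp only [γ, Pi.smul_apply, smul_eq_mul] at h0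
    exact Subtype.ext ((div_left_inj' hS0.ne').1 (mul_right_cancel₀ hx0.ne' h0))
  have hmem : ∀ t, γ t ∈ mahavier (lineL r ∪ lineL ρ) := by
    intro t
    refine smul_mem_fan hx (div_nonneg t.2.1 hS0.le) fun n => ?_
    rw [div_mul_eq_mul_div, div_le_one hS0]
    exact (mul_le_of_le_one_left (hx.1 n).1 t.2.2).trans (hxS n)
  let c : unitInterval := ⟨S, hS0.le, hS.le⟩
  have hγc : γ c = x := by simp [γ, c, hS0.ne']
  rw [← hγc]
  refine not_endpoint_of_path hc hi hmem (fun h => ?_) (fun h => ?_)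
  · exact hS0.ne' (congrArg Subtype.val h)
  · exact hS.ne (congrArg Subtype.val h)

/-- For `(r, ρ) ∈ NC` and `𝐱 ∈ M_{r,ρ}`: `𝐱` is an end-point of the continuum
`M_{r,ρ}` if and only if the supremum of its coordinates equals `1`. -/
theorem endpoint_iff_iSup_eq_one (r ρ : ℝ) (h : NC r ρ) (x : ℕ → ℝ)
    (hx : x ∈ mahavier (lineL r ∪ lineL ρ)) :
    x ∈ endpointSet (mahavier (lineL r ∪ lineL ρ)) ↔ (⨆ n, x n) = 1 := by
  obtain ⟨hr, hr1, hρ, -⟩ := h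
  refine ⟨fun hE => ?_, endpoint_of_iSup_eq_one hr (by linarith) hx⟩
  by_contra hne
  have hbdd : BddAbove (range x) := ⟨1, by rintro _ ⟨n, rfl⟩; exact (hx.1 n).2⟩
  have hlt : (⨆ n, x n) < 1 := lt_of_le_of_ne (ciSup_le fun n => (hx.1 n).2) hne
  rcases (hx.1 0).1.eq_or_lt with h0 | h0
  · rw [fan_eq_zero hx h0.symm] at hE
    exact zero_not_endpoint hr hr1 hρ hE
  · exact not_endpoint_of_lt_one hx h0 hlt (fun n => le_ciSup hbdd n) hE
end
end

section
/- Let (r,ρ) ∈ NC. Then for each x ∈ (0,1) there is a sequence a = (a₁,a₂,a₃,…) ∈ {r,ρ}^ℕ such that for each positive integer n, (a₁·a₂·…·a_n)·x ∈ [0,1], and sup{(a₁·a₂·…·a_n)·x | n a positive integer} = 1. -/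
open Set Topology

noncomputable section

/-!
Put `a = -log r`, `b = log ρ` and `u = -log s` for the current value `s`.  Multiplying by `ρ`
replaces `u` by `u - b`, multiplying by `r` replaces it by `u + a`, and `s ≤ 1` means `0 ≤ u`.
Take the greedy sequence: multiply by `ρ` whenever the result stays at most `1`, otherwise by `r`.
The orbit of `u` stays nonnegative, and after finitely many steps it enters `[0, a + b)` and never
leaves.  Modulo `a + b` both moves are the translation by `a`, so the orbit is an orbit of a
rotation of the circle `ℝ / (a + b)ℤ`.  Since `r` and `ρ` never connect, `a / (a + b)` is
irrational, the forward orbit is dense (`orbit_lt`), and `u` gets arbitrarily close to `0`;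
that is, `s` gets arbitrarily close to `1`.
-/

/-- One greedy step, written for `u = -log s`: subtract `b` (multiply `s` by `ρ`) if the result is
still nonnegative, otherwise add `a` (multiply `s` by `r`). -/
def greedyStep (a b u : ℝ) : ℝ := if b ≤ u then u - b else u + a

/-- The greedy orbit of `u₀`. -/
def greedyOrbit (a b u₀ : ℝ) : ℕ → ℝ
  | 0 => u₀
  | n + 1 => greedyStep a b (greedyOrbit a b u₀ n)

lemma greedyOrbit_nonneg {a b u₀ : ℝ} (ha : 0 < a) (hu : 0 ≤ u₀) (n : ℕ) :
    0 ≤ greedyOrbit a b u₀ n := by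
  induction n with
  | zero => exact hu
  | succ n ih =>
    simp only [greedyOrbit, greedyStep]
    split_ifs <;> linarith

/-- Modulo `a + b` the greedy orbit is an orbit of the translation by `a`. -/
lemma coe_greedyOrbit_add (a b u₀ : ℝ) (N n : ℕ) :
    (greedyOrbit a b u₀ (N + n) : AddCircle (a + b)) =
      greedyOrbit a b u₀ N + n • (a : AddCircle (a + b)) := by
  induction n with
  | zero => simp
  | succ n ih =>
    have key : ∀ u : ℝ, (greedyStep a b u : AddCircle (a + b)) = u + a := by
      intro u
      unfold greedyStep
      split_ifs
      · rw [← AddCircle.coe_add, ← sub_eq_zero, ← AddCircle.coe_sub,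
          show u - b - (u + a) = -(a + b) by ring, AddCircle.coe_neg, AddCircle.coe_period, neg_zero]
      · rw [AddCircle.coe_add]
    rw [← add_assoc, greedyOrbit, key, ih, succ_nsmul, add_assoc]

lemma greedyOrbit_lt_of_le {a b u₀ : ℝ} (hb : 0 < b) {N : ℕ}
    (hN : greedyOrbit a b u₀ N < a + b) (n : ℕ) : greedyOrbit a b u₀ (N + n) < a + b := by
  induction n with
  | zero => exact hN
  | succ n ih =>
    rw [← add_assoc, greedyOrbit, greedyStep]
    split_ifs <;> linarith

/-- The greedy orbit reaches `[0, a + b)` at a positive time: as long as it has not, every step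
lowers it by `b`. -/
lemma exists_greedyOrbit_lt {a b : ℝ} (ha : 0 < a) (hb : 0 < b) (u₀ : ℝ) :
    ∃ N, greedyOrbit a b u₀ (N + 1) < a + b := by
  by_contra! hcon
  have hlin : ∀ n : ℕ, greedyOrbit a b u₀ (n + 1) = greedyOrbit a b u₀ 1 - n * b := by
    intro n
    induction n with
    | zero => simp
    | succ n ih =>
      rw [greedyOrbit, greedyStep, if_pos (by linarith [hcon n]), ih]
      push_cast
      ring
  obtain ⟨n, hn⟩ := exists_nat_gt (greedyOrbit a b u₀ 1 / b)
  rw [div_lt_iff₀ hb] at hn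
  linarith [hcon n, hlin n]

/-- The greedy orbit comes arbitrarily close to `0` at positive times. -/
lemma orbit_lt {a b u₀ : ℝ} (ha : 0 < a) (hb : 0 < b) (hu : 0 ≤ u₀)
    (hirr : Irrational (a / (a + b))) {ε : ℝ} (hε : 0 < ε) :
    ∃ n, greedyOrbit a b u₀ (n + 1) < ε := by
  have : Fact (0 < a + b) := ⟨by linarith⟩
  obtain ⟨N, hN⟩ := exists_greedyOrbit_lt ha hb u₀
  have hd : DenseRange (fun n : ℕ => n • (a : AddCircle (a + b))) :=
    denseRange_zsmul_iff_nsmul.1 (AddCircle.denseRange_zsmul_coe_iff.2 hirr)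
  set c : AddCircle (a + b) := ((greedyOrbit a b u₀ (N + 1) : ℝ) : AddCircle (a + b))
  -- The rotated orbit meets the open arc `(0, min ε (a + b))`.
  have hopen : IsOpen ((fun z : AddCircle (a + b) => c + z) ⁻¹'
      ((fun t : ℝ => (t : AddCircle (a + b))) '' Ioo 0 (min ε (a + b)))) :=
    (QuotientAddGroup.isOpenMap_coe _ isOpen_Ioo).preimage (continuous_const_add c)
  have hpos : 0 < min ε (a + b) := lt_min hε (by linarith)
  obtain ⟨n, t, ht, htn⟩ := hd.exists_mem_open hopen
    ⟨((min ε (a + b) / 2 : ℝ) : AddCircle (a + b)) - c, min ε (a + b) / 2,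
      ⟨by linarith, by linarith⟩, by simp⟩
  dsimp only at htn
  have heq := coe_greedyOrbit_add a b u₀ (N + 1) n
  rw [show (greedyOrbit a b u₀ (N + 1) : AddCircle (a + b)) = c from rfl, ← htn,
    AddCircle.coe_eq_coe_iff_of_mem_Ico (a := 0)
      ⟨greedyOrbit_nonneg ha hu _, by simpa using greedyOrbit_lt_of_le hb hN n⟩
      ⟨ht.1.le, by simpa using ht.2.trans_le (min_le_right _ _)⟩] at heq
  refine ⟨N + n, ?_⟩
  rw [show N + n + 1 = N + 1 + n by ring, heq]
  exact ht.2.trans_le (min_le_left _ _)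

lemma NC.irrational {r ρ : ℝ} (h : NC r ρ) :
    Irrational (-Real.log r / (-Real.log r + Real.log ρ)) := by
  obtain ⟨hr0, hr1, hρ, hNC⟩ := h
  have ha := Real.log_neg hr0 hr1
  have hb := Real.log_pos hρ
  rintro ⟨q, hq⟩
  have hden : (q.den : ℝ) ≠ 0 := by exact_mod_cast q.den_ne_zero
  rw [Rat.cast_def, div_eq_div_iff hden (add_pos (neg_pos.2 ha) hb).ne'] at hq
  -- With `q = m / d` the equation says `(m - d) log r = m log ρ`, that is `r ^ (m - d) = ρ ^ m`.
  have hpow : r ^ (q.num - q.den : ℤ) = ρ ^ q.num := by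
    apply Real.log_injOn_pos (zpow_pos hr0 _) (zpow_pos (zero_lt_one.trans hρ) _)
    rw [Real.log_zpow, Real.log_zpow]
    push_cast
    linarith
  obtain ⟨h1, h2⟩ := (hNC _ _).1 hpow
  have := q.den_ne_zero
  omega

/-- For `(r, ρ) ∈ NC` and `x ∈ (0,1)`, there is a sequence `a ∈ {r,ρ}^ℕ` with
all partial products `(a₁⋯aₙ)·x ∈ [0,1]` and `sup {(a₁⋯aₙ)·x | n ≥ 1} = 1`. -/
theorem exists_seq_sup_eq_one (r ρ : ℝ) (h : NC r ρ) (x : ℝ) (hx : x ∈ Ioo (0 : ℝ) 1) :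
    ∃ a : ℕ → ℝ, (∀ n, a n = r ∨ a n = ρ) ∧
      (∀ n : ℕ, (∏ i ∈ Finset.range (n + 1), a i) * x ∈ Icc (0 : ℝ) 1) ∧
      (⨆ n : ℕ, (∏ i ∈ Finset.range (n + 1), a i) * x) = 1 := by
  obtain ⟨hx0, hx1⟩ := hx
  have hirr := h.irrational
  obtain ⟨hr0, hr1, hρ, -⟩ := h
  set a := -Real.log r with ha_def
  set b := Real.log ρ with hb_def
  have ha : 0 < a := neg_pos.2 (Real.log_neg hr0 hr1)
  have hb : 0 < b := Real.log_pos hρ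
  have hu : 0 ≤ -Real.log x := (neg_pos.2 (Real.log_neg hx0 hx1)).le
  set u := greedyOrbit a b (-Real.log x) with hu_def
  have hprod : ∀ n, (∏ i ∈ Finset.range n, if b ≤ u i then ρ else r) * x = Real.exp (-u n) := by
    intro n
    induction n with
    | zero => simp [hu_def, greedyOrbit, Real.exp_log hx0]
    | succ n ih =>
      have hstep : u (n + 1) = greedyStep a b (u n) := rfl
      rw [Finset.prod_range_succ, mul_right_comm, ih, hstep, greedyStep]
      split_ifs
      · rw [neg_sub, sub_eq_neg_add, Real.exp_add, hb_def, Real.exp_log (by linarith)]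
      · rw [neg_add, Real.exp_add, ha_def, neg_neg, Real.exp_log hr0]
  have hle : ∀ n, Real.exp (-u n) ≤ 1 := fun n =>
    Real.exp_le_one_iff.2 (neg_nonpos.2 (greedyOrbit_nonneg ha hu n))
  refine ⟨fun n => if b ≤ u n then ρ else r, fun n => ?_, fun n => ?_, ?_⟩
  · dsimp only
    split_ifs <;> simp
  · rw [hprod]
    exact ⟨(Real.exp_pos _).le, hle _⟩
  · simp only [hprod]
    refine ciSup_eq_of_forall_le_of_forall_lt_exists_gt (fun n => hle _) fun w hw => ?_
    rcases le_or_gt w 0 with hw0 | hw0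
    · exact ⟨0, hw0.trans_lt (Real.exp_pos _)⟩
    · obtain ⟨n, hn⟩ := orbit_lt ha hb hu hirr (neg_pos.2 (Real.log_neg hw0 hw))
      exact ⟨n, (Real.log_lt_iff_lt_exp hw0).1 (by linarith)⟩
end
end

section
/- Let r, ρ be reals with 0 < r < 1 < ρ. Then for all sequences 𝐚, 𝐛 ∈ {1,r,ρ}^ℕ: B_𝐚 ∩ B_𝐛 = {(0,0,0,…)} if and only if 𝐚 ≠ 𝐛. -/
/-! A point `x` of `B_𝐚` satisfies `x (n + 1) = 𝐚 n * x n`, and its parameter is `t = x 0`. All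
`𝐚 n` are nonzero, so when `x 0 ≠ 0` every coordinate of `x` is nonzero and `𝐚` is recovered as the
sequence of ratios of consecutive coordinates. Hence a common nonzero point of `B_𝐚` and `B_𝐛`
forces `𝐚 = 𝐛`. -/

open Set Topology

noncomputable section

/-- For `0 < r < 1 < ρ` and `𝐚, 𝐛 ∈ {1,r,ρ}^ℕ`:
`B_𝐚 ∩ B_𝐛 = {(0,0,0,…)}` if and only if `𝐚 ≠ 𝐛`. -/
theorem Bset_inter_eq_singleton_iff (r ρ : ℝ) (hr : 0 < r) (hr1 : r < 1) (hρ : 1 < ρ)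
    (a b : ℕ → ℝ) (ha : ∀ n, a n ∈ ({1, r, ρ} : Set ℝ)) (hb : ∀ n, b n ∈ ({1, r, ρ} : Set ℝ)) :
    Bset a ∩ Bset b = {fun _ => 0} ↔ a ≠ b := by
  constructor
  · rintro h rfl
    -- for `a = b` the intersection contains the nonzero point of parameter `t = 1`
    have hx : (fun n => ∏ i ∈ Finset.range n, a i) ∈ Bset a ∩ Bset a := by
      rw [Set.inter_self]
      exact ⟨1, by simp, fun n => by simp⟩
    rw [h] at hx
    simpa using congrFun (Set.mem_singleton_iff.mp hx) 0
  · intro hne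
    ext x
    simp only [Set.mem_inter_iff, Set.mem_singleton_iff]
    constructor
    · rintro ⟨⟨t, -, hx⟩, ⟨s, -, hx'⟩⟩
      have ht : x 0 = t := by simpa using hx 0
      have hs : x 0 = s := by simpa using hx' 0
      by_cases h0 : x 0 = 0
      · funext n
        rw [hx n, ← ht, h0, mul_zero]
      · refine absurd (funext fun n => ?_) hne
        have hpos : ∀ i, a i ≠ 0 := by
          intro i
          rcases ha i with h | h | h <;> rw [h] <;> apply ne_of_gt <;> linarith
        have hxn : x n ≠ 0 := by
          rw [hx n, ← ht]
          exact mul_ne_zero (Finset.prod_ne_zero_iff.mpr fun i _ => hpos i) h0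
        have h1 : x (n + 1) = a n * x n := by
          rw [hx, hx n, Finset.prod_range_succ]; ring
        have h2 : x (n + 1) = b n * x n := by
          rw [hx', hx' n, Finset.prod_range_succ]; ring
        exact mul_right_cancel₀ hxn (h1.symm.trans h2)
    · rintro rfl
      exact ⟨⟨0, by simp, fun n => by simp⟩, ⟨0, by simp, fun n => by simp⟩⟩
end
end

section
/- Let (r,ρ) ∈ NC and let F = L_{r,ρ} ∪ {(t,t) | t ∈ [0,1]}. Then the Mahavier product X_F^+ is a continuum: it is non-empty, compact, connected, and metrizable. -/
/-!
The relation `F = L_r ∪ L_ρ ∪ Δ` is closed and invariant under scaling by any `c ∈ [0,1]`, since each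
of its three pieces is a line segment through the origin inside the unit square. Closedness makes
the Mahavier product a closed subset of the compact cube `[0,1]^ℕ`; scaling invariance makes it
star-convex about the zero sequence, hence path connected. It is metrizable as a subspace of the
metrizable space `ℝ^ℕ`.
-/


open Set Topology

noncomputable section

lemma isClosed_lineL (r : ℝ) : IsClosed (lineL r) :=
  (isClosed_Icc.preimage continuous_fst).inter
    ((isClosed_Icc.preimage continuous_snd).inter
      (isClosed_eq continuous_snd (continuous_const.mul continuous_fst)))

lemma isClosed_unitDiag : IsClosed unitDiag :=
  (isClosed_Icc.preimage continuous_fst).inter (isClosed_eq continuous_snd continuous_fst)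

lemma isCompact_mahavier {F : Set (ℝ × ℝ)} (hF : IsClosed F) : IsCompact (mahavier F) := by
  have hcube : IsCompact {x : ℕ → ℝ | ∀ k, x k ∈ Icc (0 : ℝ) 1} :=
    isCompact_pi_infinite fun _ => isCompact_Icc
  refine hcube.inter_right (t := {x : ℕ → ℝ | ∀ k, (x k, x (k + 1)) ∈ F}) ?_
  rw [ofPred_forall]
  exact isClosed_iInter fun k =>
    hF.preimage ((continuous_apply k).prodMk (continuous_apply (k + 1)))

lemma mul_mem_unitInterval {c t : ℝ} (hc : c ∈ Icc (0 : ℝ) 1) (ht : t ∈ Icc (0 : ℝ) 1) :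
    c * t ∈ Icc (0 : ℝ) 1 :=
  ⟨mul_nonneg hc.1 ht.1, mul_le_one₀ hc.2 ht.1 ht.2⟩

lemma starConvex_mahavier {F : Set (ℝ × ℝ)}
    (hF : ∀ c ∈ Icc (0 : ℝ) 1, ∀ p ∈ F, (c * p.1, c * p.2) ∈ F) :
    StarConvex ℝ 0 (mahavier F) := by
  rw [starConvex_zero_iff]
  intro x hx c hc0 hc1
  exact ⟨fun k => mul_mem_unitInterval ⟨hc0, hc1⟩ (hx.1 k), fun k => hF c ⟨hc0, hc1⟩ _ (hx.2 k)⟩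

lemma smul_mem_lineL {r c : ℝ} (hc : c ∈ Icc (0 : ℝ) 1) {p : ℝ × ℝ} (hp : p ∈ lineL r) :
    (c * p.1, c * p.2) ∈ lineL r :=
  ⟨mul_mem_unitInterval hc hp.1, mul_mem_unitInterval hc hp.2.1, by
    change c * p.2 = r * (c * p.1)
    rw [hp.2.2]; ring⟩

lemma smul_mem_unitDiag {c : ℝ} (hc : c ∈ Icc (0 : ℝ) 1) {p : ℝ × ℝ} (hp : p ∈ unitDiag) :
    (c * p.1, c * p.2) ∈ unitDiag :=
  ⟨mul_mem_unitInterval hc hp.1, congrArg (c * ·) hp.2⟩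

/-- For `(r, ρ) ∈ NC` and `F = L_{r,ρ} ∪ {(t,t) | t ∈ [0,1]}`, the Mahavier
product `X_F⁺` is a continuum: non-empty, compact, connected and metrizable. -/
theorem mahavier_union_diag_isContinuum (r ρ : ℝ) (h : NC r ρ) :
    (mahavier (lineL r ∪ lineL ρ ∪ unitDiag)).Nonempty ∧
    IsCompact (mahavier (lineL r ∪ lineL ρ ∪ unitDiag)) ∧
    IsConnected (mahavier (lineL r ∪ lineL ρ ∪ unitDiag)) ∧
    TopologicalSpace.MetrizableSpace ↥(mahavier (lineL r ∪ lineL ρ ∪ unitDiag)) := by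
  have h0 : (0 : ℕ → ℝ) ∈ mahavier (lineL r ∪ lineL ρ ∪ unitDiag) :=
    ⟨fun _ => by simp, fun _ => Or.inr (by simp [unitDiag])⟩
  refine ⟨⟨0, h0⟩, isCompact_mahavier
    (((isClosed_lineL r).union (isClosed_lineL ρ)).union isClosed_unitDiag), ?_, inferInstance⟩
  refine ((starConvex_mahavier ?_).isPathConnected h0).isConnected
  rintro c hc p ((hp | hp) | hp)
  · exact Or.inl (Or.inl (smul_mem_lineL hc hp))
  · exact Or.inl (Or.inr (smul_mem_lineL hc hp))
  · exact Or.inr (smul_mem_unitDiag hc hp)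
end
end

section
/- Let (r,ρ) ∈ NC, let F = L_{r,ρ} ∪ {(t,t) | t ∈ [0,1]}, and let 𝐚 ∈ {1,r,ρ}^ℕ. Then the set A_𝐚 = B_𝐚 ∩ X_F^+ contains the point (0,0,0,…) and is either degenerate (a single point) or an arc one of whose end-points is (0,0,0,…). -/
/-!
Write `Pₙ = 𝐚(1)⋯𝐚(n)`, so that `Pₙ > 0`. The point of `B_𝐚` with parameter `t` lies in `X⁺_F`
exactly when all of its coordinates `Pₙ t` are at most `1`, since consecutive coordinates are then
automatically `F`-related. The set of admissible parameters is therefore closed, bounded, downward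
closed in `[0,1]`, and contains `0`, i.e. it is `[0,s]`, where `s` is its maximum. If `s = 0`, then
`A_𝐚` is the single point `0`; otherwise `u ↦ (Pₙ s u)ₙ` is a homeomorphism of `[0,1]` onto `A_𝐚`
with inverse `x ↦ x₀ / s`, and it sends `0` to `(0,0,…)`.
-/

open Set Topology

noncomputable section

/-- Membership in `A_𝐚` in terms of the parameter: the only constraint is that all coordinates
stay below `1`. -/
lemma mem_Aset_iff {r ρ : ℝ} (hr : 0 < r) (hρ : 0 < ρ) {a : ℕ → ℝ}
    (ha : ∀ n, a n ∈ ({1, r, ρ} : Set ℝ)) (x : ℕ → ℝ) :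
    x ∈ Bset a ∩ mahavier (lineL r ∪ lineL ρ ∪ unitDiag) ↔
      ∃ t ∈ Icc (0 : ℝ) 1, (∀ n, (∏ i ∈ Finset.range n, a i) * t ≤ 1) ∧
        x = fun n => (∏ i ∈ Finset.range n, a i) * t := by
  have hpos : ∀ n, 0 < a n := by
    intro n
    rcases ha n with h | h | h
    · rw [h]; exact one_pos
    · rw [h]; exact hr
    · rw [mem_singleton_iff.1 h]; exact hρ
  constructor
  · rintro ⟨⟨t, ht, hx⟩, hI, -⟩
    exact ⟨t, ht, fun n => hx n ▸ (hI n).2, funext hx⟩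
  · rintro ⟨t, ht, hle, rfl⟩
    have hI : ∀ k, (∏ i ∈ Finset.range k, a i) * t ∈ Icc (0 : ℝ) 1 := fun k =>
      ⟨mul_nonneg (Finset.prod_nonneg fun i _ => (hpos i).le) ht.1, hle k⟩
    refine ⟨⟨t, ht, fun n => rfl⟩, hI, fun k => ?_⟩
    have hstep : (∏ i ∈ Finset.range (k + 1), a i) * t
        = a k * ((∏ i ∈ Finset.range k, a i) * t) := by
      rw [Finset.prod_range_succ]; ring
    rcases ha k with h | h | h
    · exact Or.inr ⟨hI k, by simp only [hstep, h, one_mul]⟩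
    · exact Or.inl (Or.inl ⟨hI k, hI (k + 1), by simp only [hstep, h]⟩)
    · exact Or.inl (Or.inr ⟨hI k, hI (k + 1), by
        simp only [hstep, mem_singleton_iff.1 h]⟩)

/-- For `(r, ρ) ∈ NC`, `F = L_{r,ρ} ∪ {(t,t) | t ∈ [0,1]}` and
`𝐚 ∈ {1,r,ρ}^ℕ`, the set `A_𝐚 = B_𝐚 ∩ X_F⁺` contains `(0,0,0,…)` and is either a single
point or an arc having `(0,0,0,…)` as one of its end-points. -/
theorem Aset_singleton_or_arc (r ρ : ℝ) (h : NC r ρ)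
    (a : ℕ → ℝ) (ha : ∀ n, a n ∈ ({1, r, ρ} : Set ℝ)) :
    (fun _ => (0 : ℝ)) ∈ Bset a ∩ mahavier (lineL r ∪ lineL ρ ∪ unitDiag) ∧
    (Bset a ∩ mahavier (lineL r ∪ lineL ρ ∪ unitDiag) = {fun _ => 0} ∨
      (IsArc (Bset a ∩ mahavier (lineL r ∪ lineL ρ ∪ unitDiag)) ∧
       IsArcEndpoint (Bset a ∩ mahavier (lineL r ∪ lineL ρ ∪ unitDiag)) (fun _ => 0))) := by
  obtain ⟨hr, -, hρ, -⟩ := h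
  have hρ0 : 0 < ρ := one_pos.trans hρ
  have hmem := mem_Aset_iff hr hρ0 ha
  set A := Bset a ∩ mahavier (lineL r ∪ lineL ρ ∪ unitDiag) with hA
  clear_value A
  set P : ℕ → ℝ := fun n => ∏ i ∈ Finset.range n, a i with hP
  have hP0 : P 0 = 1 := by simp [hP]
  have hPpos : ∀ n, 0 < P n := by
    intro n
    refine Finset.prod_pos fun i _ => ?_
    rcases ha i with h | h | h
    · rw [h]; exact one_pos
    · rw [h]; exact hr
    · rw [mem_singleton_iff.1 h]; exact hρ0
  replace hmem : ∀ x, x ∈ A ↔ ∃ t ∈ Icc (0 : ℝ) 1, (∀ n, P n * t ≤ 1) ∧ x = fun n => P n * t :=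
    hmem
  have h0 : (fun _ => (0 : ℝ)) ∈ A :=
    (hmem _).2 ⟨0, by simp, by simp, by simp⟩
  refine ⟨h0, ?_⟩
  let T : Set ℝ := {t | t ∈ Icc (0 : ℝ) 1 ∧ ∀ n, P n * t ≤ 1}
  have hTc : IsCompact T := by
    refine isCompact_Icc.of_isClosed_subset ?_ (fun t ht => ht.1)
    simp only [T, ofPred_and, ofPred_forall]
    exact isClosed_Icc.inter
      (isClosed_iInter fun n => isClosed_le (by fun_prop) continuous_const)
  obtain ⟨s, ⟨hsI, hs1⟩, hsmax⟩ := hTc.exists_isGreatest ⟨0, by simp [T]⟩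
  rcases hsI.1.eq_or_lt with hs | hs
  · left
    refine Subset.antisymm (fun x hx => ?_) (singleton_subset_iff.2 h0)
    obtain ⟨t, ht, hle, rfl⟩ := (hmem x).1 hx
    have ht0 : t = 0 := le_antisymm (hs ▸ hsmax ⟨ht, hle⟩) ht.1
    simp [ht0]
  · right
    let e : unitInterval ≃ₜ A :=
      { toFun := fun u => ⟨fun n => P n * (s * u), (hmem _).2
          ⟨s * u, ⟨mul_nonneg hs.le u.2.1, mul_le_one₀ hsI.2 u.2.1 u.2.2⟩, fun n =>
            (mul_le_mul_of_nonneg_left (mul_le_of_le_one_right hs.le u.2.2)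
              (hPpos n).le).trans (hs1 n), rfl⟩⟩
        invFun := fun x => ⟨x.1 0 / s, by
          obtain ⟨t, ht, hle, hx⟩ := (hmem x.1).1 x.2
          simp only [hx, hP0, one_mul]
          exact ⟨div_nonneg ht.1 hs.le, (div_le_one hs).2 (hsmax ⟨ht, hle⟩)⟩⟩
        left_inv := fun u => by
          ext
          simp only [hP0, one_mul]
          field_simp
        right_inv := fun x => by
          obtain ⟨t, ht, hle, hx⟩ := (hmem x.1).1 x.2
          ext n
          simp only [hx, hP0, one_mul]
          field_simp
        continuous_toFun := by fun_prop
        continuous_invFun := by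
          have hc0 : Continuous fun x : ℕ → ℝ => x 0 := continuous_apply 0
          have hc : Continuous fun x : A => x.1 0 / s :=
            (hc0.comp continuous_subtype_val).div_const s
          exact hc.subtype_mk _ }
    exact ⟨⟨e.symm⟩, e, Or.inl (by ext n; simp [e])⟩
end
end

section
/- Let (r,ρ) ∈ NC, let F = L_{r,ρ} ∪ {(t,t) | t ∈ [0,1]}, and let 𝐱 = (𝐱(1),𝐱(2),𝐱(3),…) ∈ X_F^+. Then 𝐱 is an end-point of the continuum X_F^+ if and only if sup{𝐱(k) | k a positive integer} = 1. -/
/-!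
Every point of `X⁺_F` other than the origin has positive coordinates, and its successive ratios
`x (n + 1) / x n` lie in the discrete set `{r, ρ, 1}`. Hence the ratios are constant along any
connected subset avoiding the origin, so such a subset lies on a single ray `{t • x}`
(`proportional_of_mem_Icc`), on which the zeroth coordinate is injective and strictly
monotone along any arc.

If `sup x = 1` and `x` were an interior point of an arc, the arc would contain some `t • x` with
`t > 1`, whose supremum is `t > 1`; this is impossible (`not_interior_of_iSup_eq_one`).
If `s = sup x < 1`, then `x` is an interior point of an arc: of the segment from `0` to `s⁻¹ • x`
when `x ≠ 0`, and of the union of the two rays with ratios constantly `1` and constantly `r` when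
`x = 0`. A point interior to one parametrization of an arc is not an end-point under any other,
because continuous bijections of `[0,1]` are strictly monotone or antitone
(`not_mem_endpointSet`).
-/

open Set Topology

noncomputable section

open unitInterval

/-- The relation `F = L_r ∪ L_ρ ∪ Δ` of the theorem. -/
abbrev relF (r ρ : ℝ) : Set (ℝ × ℝ) := lineL r ∪ lineL ρ ∪ unitDiag

lemma step_eq {r ρ : ℝ} {x : ℕ → ℝ} (hx : x ∈ mahavier (relF r ρ)) (k : ℕ) :
    x (k + 1) = r * x k ∨ x (k + 1) = ρ * x k ∨ x (k + 1) = x k := by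
  rcases hx.2 k with (h | h) | h
  · exact Or.inl h.2.2
  · exact Or.inr (Or.inl h.2.2)
  · exact Or.inr (Or.inr h.2)

lemma mem_of_step {r ρ : ℝ} {x : ℕ → ℝ} (h01 : ∀ k, x k ∈ Icc (0 : ℝ) 1)
    (hs : ∀ k, x (k + 1) = r * x k ∨ x (k + 1) = ρ * x k ∨ x (k + 1) = x k) :
    x ∈ mahavier (relF r ρ) := by
  refine ⟨h01, fun k => ?_⟩
  rcases hs k with h | h | h
  · exact Or.inl (Or.inl ⟨h01 k, h01 _, h⟩)
  · exact Or.inl (Or.inr ⟨h01 k, h01 _, h⟩)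
  · exact Or.inr ⟨h01 k, h⟩

lemma bddAbove_of_mem {F : Set (ℝ × ℝ)} {x : ℕ → ℝ} (hx : x ∈ mahavier F) :
    BddAbove (range x) := ⟨1, by rintro _ ⟨k, rfl⟩; exact (hx.1 k).2⟩

lemma eq_zero_of_zero {r ρ : ℝ} {x : ℕ → ℝ} (hx : x ∈ mahavier (relF r ρ)) (h0 : x 0 = 0)
    (n : ℕ) : x n = 0 := by
  induction n with
  | zero => exact h0
  | succ n ih => rcases step_eq hx n with h | h | h <;> simp [h, ih]

lemma pos_of_pos {r ρ : ℝ} (hr : 0 < r) (hρ : 0 < ρ) {x : ℕ → ℝ}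
    (hx : x ∈ mahavier (relF r ρ)) (h0 : 0 < x 0) (n : ℕ) : 0 < x n := by
  induction n with
  | zero => exact h0
  | succ n ih => rcases step_eq hx n with h | h | h <;> rw [h] <;> positivity

/-- An interior point of a parametrized arc in `Y` is not an end-point of `Y`. -/
lemma not_mem_endpointSet {X : Type*} [TopologicalSpace X] [T2Space X] {Y : Set X}
    {γ : I → X} (hγ : Continuous γ) (hinj : Function.Injective γ) (hY : ∀ t, γ t ∈ Y)
    {c : I} (h0 : c ≠ 0) (h1 : c ≠ 1) : γ c ∉ endpointSet Y := by
  rintro ⟨-, hend⟩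
  let e : I ≃ₜ range γ := (hγ.isClosedEmbedding hinj).isEmbedding.toHomeomorph
  have he : ∀ t, ((e t : range γ) : X) = γ t := fun t => rfl
  obtain ⟨h, hh⟩ := hend (range γ) (by rintro _ ⟨t, rfl⟩; exact hY t) ⟨e.symm⟩ ⟨c, rfl⟩
  let g : I ≃ₜ I := h.trans e.symm
  have key : ∀ s, ((h s : range γ) : X) = γ c → g s = c := fun s hs => by
    have : h s = e c := Subtype.ext hs
    simp [g, this]
  obtain ⟨a, ha⟩ := g.surjective 0
  obtain ⟨b, hb⟩ := g.surjective 1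
  have ends : (g 0 = 0 ∧ g 1 = 1) ∨ (g 0 = 1 ∧ g 1 = 0) := by
    rcases g.continuous.strictMono_of_inj_boundedOrder' g.injective with hm | hm
    · refine Or.inl ⟨?_, ?_⟩
      · exact le_antisymm ((hm.monotone (unitInterval.nonneg' (t := a))).trans_eq ha) (g 0).2.1
      · exact le_antisymm (g 1).2.2 (hb.symm.trans_le (hm.monotone (unitInterval.le_one' (t := b))))
    · refine Or.inr ⟨?_, ?_⟩
      · exact le_antisymm (g 0).2.2 (hb.symm.trans_le (hm.antitone (unitInterval.nonneg' (t := b))))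
      · exact le_antisymm ((hm.antitone (unitInterval.le_one' (t := a))).trans_eq ha) (g 1).2.1
  rcases hh with hh | hh <;> have := key _ hh <;> rcases ends with ⟨e0, e1⟩ | ⟨e0, e1⟩ <;>
    simp_all

/-- Along a path in `X⁺_F` that avoids the origin, the ratios of successive coordinates take
values in `{r, ρ, 1}` and are therefore constant, so all the points are proportional. -/
lemma proportional_of_mem_Icc {r ρ : ℝ} (hr : 0 < r) (hρ : 0 < ρ) {g : ℝ → ℕ → ℝ}
    (hg : Continuous g) (hX : ∀ t, g t ∈ mahavier (relF r ρ)) {u v : ℝ}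
    (hpos : ∀ t ∈ Icc u v, 0 < g t 0) {s t : ℝ} (hs : s ∈ Icc u v) (ht : t ∈ Icc u v) (n : ℕ) :
    g s n * g t 0 = g t n * g s 0 := by
  have hp : ∀ t ∈ Icc u v, ∀ n, 0 < g t n := fun t ht => pos_of_pos hr hρ (hX t) (hpos t ht)
  have hgn : ∀ n, Continuous fun t => g t n := fun n => (continuous_apply n).comp hg
  have ratio : ∀ n, g s (n + 1) / g s n = g t (n + 1) / g t n := by
    intro n
    have hc : ContinuousOn (fun t => g t (n + 1) / g t n) (Icc u v) :=
      (hgn _).continuousOn.div (hgn _).continuousOn fun t ht => (hp t ht n).ne'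
    have hfin : ((fun t => g t (n + 1) / g t n) '' Icc u v) ⊆ ({r, ρ, 1} : Set ℝ) := by
      rintro _ ⟨t, ht, rfl⟩
      have := (hp t ht n).ne'
      rcases step_eq (hX t) n with h | h | h <;> simp [h, this]
    exact (Set.toFinite ({r, ρ, 1} : Set ℝ)).countable.isTotallyDisconnected _ hfin
      (isPreconnected_Icc.image _ hc) ⟨s, hs, rfl⟩ ⟨t, ht, rfl⟩
  induction n with
  | zero => ring
  | succ n ih =>
    have h := ratio n
    have h1 := (hp s hs n).ne'
    have h2 := (hp t ht n).ne'
    rw [div_eq_div_iff h1 h2] at h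
    apply mul_right_cancel₀ (mul_ne_zero h1 h2)
    linear_combination (g s n * g t 0) * h + (g t (n + 1) * g s n) * ih

lemma not_interior_of_iSup_eq_one {r ρ : ℝ} (hr : 0 < r) (hρ : 0 < ρ) {g : ℝ → ℕ → ℝ}
    (hg : Continuous g) (hX : ∀ t, g t ∈ mahavier (relF r ρ)) {a b c : ℝ}
    (hinj : InjOn g (Icc a b)) (hac : a < c) (hcb : c < b) : (⨆ n, g c n) ≠ 1 := by
  intro hsup
  have hg0 : Continuous fun t => g t 0 := (continuous_apply 0).comp hg
  have hc0 : 0 < g c 0 := by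
    refine lt_of_le_of_ne ((hX c).1 0).1 fun h => ?_
    have : g c = fun _ => 0 := funext (eq_zero_of_zero (hX c) h.symm)
    simp [this] at hsup
  obtain ⟨δ, hδ, hJ⟩ := Metric.nhds_basis_closedBall.mem_iff.1
    (Filter.inter_mem (Icc_mem_nhds hac hcb) (hg0.continuousAt.eventually (lt_mem_nhds hc0)))
  rw [Real.closedBall_eq_Icc] at hJ
  have hcJ : c ∈ Icc (c - δ) (c + δ) := ⟨by linarith, by linarith⟩
  have hprop := fun s (hs : s ∈ Icc (c - δ) (c + δ)) =>
    proportional_of_mem_Icc hr hρ hg hX (fun t ht => (hJ ht).2) hs hcJ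
  have hinj0 : InjOn (fun t => g t 0) (Icc (c - δ) (c + δ)) := by
    intro s hs t ht hst
    refine hinj (hJ hs).1 (hJ ht).1 (funext fun n => ?_)
    apply mul_right_cancel₀ hc0.ne'
    rw [hprop s hs, hprop t ht]
    exact congrArg (g c n * ·) hst
  -- Strict monotonicity gives a point beyond `g c` on its ray.
  obtain ⟨t, ht, hlt⟩ : ∃ t ∈ Icc (c - δ) (c + δ), g c 0 < g t 0 := by
    rcases hg0.continuousOn.strictMonoOn_of_injOn_Icc' (by linarith) hinj0 with hm | hm
    · exact ⟨c + δ, ⟨by linarith, le_rfl⟩, hm hcJ ⟨by linarith, le_rfl⟩ (by linarith)⟩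
    · exact ⟨c - δ, ⟨le_rfl, by linarith⟩, hm ⟨le_rfl, by linarith⟩ hcJ (by linarith)⟩
  have hle : (⨆ n, g c n) ≤ g c 0 / g t 0 := by
    refine ciSup_le fun n => ?_
    rw [le_div_iff₀ (hc0.trans hlt), ← hprop t ht n]
    exact mul_le_of_le_one_left hc0.le ((hX t).1 n).2
  have : g c 0 / g t 0 < 1 := (div_lt_one (hc0.trans hlt)).2 hlt
  linarith

/-- The origin is interior to the arc formed by the rays with ratios `1, 1, …` and `r, r, …`. -/
lemma zero_not_mem_endpointSet {r ρ : ℝ} (hr : 0 < r) (hr1 : r < 1) :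
    (fun _ => 0 : ℕ → ℝ) ∉ endpointSet (mahavier (relF r ρ)) := by
  let γ : I → ℕ → ℝ := fun t n => max 0 (1 - 2 * (t : ℝ)) + max 0 (2 * (t : ℝ) - 1) * r ^ n
  have hγ : Continuous γ := continuous_pi fun n => by fun_prop
  have hval : ∀ t : I, ((t : ℝ) ≤ 1 / 2 ∧ ∀ n, γ t n = 1 - 2 * t) ∨
      (1 / 2 < (t : ℝ) ∧ ∀ n, γ t n = (2 * t - 1) * r ^ n) := by
    intro t
    rcases le_or_gt (t : ℝ) (1 / 2) with ht | ht
    · refine Or.inl ⟨ht, fun n => ?_⟩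
      simp only [γ]
      rw [max_eq_right (by linarith), max_eq_left (by linarith)]
      ring
    · refine Or.inr ⟨ht, fun n => ?_⟩
      simp only [γ]
      rw [max_eq_left (by linarith), max_eq_right (by linarith)]
      ring
  have hinj : Function.Injective γ := by
    intro s t hst
    apply Subtype.ext
    have e0 := congrFun hst 0
    have e1 := congrFun hst 1
    rcases hval s with ⟨hs, fs⟩ | ⟨hs, fs⟩ <;> rcases hval t with ⟨ht, ft⟩ | ⟨ht, ft⟩ <;>
      simp only [fs, ft, pow_zero, pow_one, mul_one] at e0 e1 <;> nlinarith
  have hX : ∀ t, γ t ∈ mahavier (relF r ρ) := by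
    intro t
    have ht0 := t.2.1
    have ht1 := t.2.2
    rcases hval t with ⟨ht, ft⟩ | ⟨ht, ft⟩
    · refine mem_of_step (fun k => ?_) fun k => Or.inr (Or.inr ?_)
      · rw [ft]; constructor <;> linarith
      · rw [ft, ft]
    · refine mem_of_step (fun k => ?_) fun k => Or.inl ?_
      · rw [ft]
        have hp : 0 < r ^ k := by positivity
        have hp1 : r ^ k ≤ 1 := pow_le_one₀ hr.le hr1.le
        constructor <;> nlinarith
      · rw [ft, ft]; ring
  have hc : γ ⟨1 / 2, by norm_num, by norm_num⟩ = fun _ => 0 := by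
    funext n; simp [γ]
  rw [← hc]
  refine not_mem_endpointSet hγ hinj hX ?_ ?_ <;> simp [Subtype.ext_iff]

lemma not_mem_endpointSet_of_iSup_lt_one {r ρ : ℝ} {x : ℕ → ℝ} (hx : x ∈ mahavier (relF r ρ))
    (h0 : 0 < x 0) (hs : (⨆ n, x n) < 1) : x ∉ endpointSet (mahavier (relF r ρ)) := by
  set s := ⨆ n, x n with hsdef
  have hle : ∀ n, x n ≤ s := le_ciSup (bddAbove_of_mem hx)
  have hspos : 0 < s := h0.trans_le (hle 0)
  let γ : I → ℕ → ℝ := fun t n => (t : ℝ) / s * x n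
  have hγ : Continuous γ := continuous_pi fun n => by fun_prop
  have hinj : Function.Injective γ := by
    intro t u htu
    have e0 : (t : ℝ) / s * x 0 = u / s * x 0 := congrFun htu 0
    exact Subtype.ext ((div_left_inj' hspos.ne').1 (mul_right_cancel₀ h0.ne' e0))
  have hX : ∀ t, γ t ∈ mahavier (relF r ρ) := by
    intro t
    refine mem_of_step (fun k => ⟨?_, ?_⟩) fun k => ?_
    · exact mul_nonneg (div_nonneg t.2.1 hspos.le) (hx.1 k).1
    · have : (t : ℝ) / s * x k = t * (x k / s) := by ring
      simp only [γ, this]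
      exact mul_le_one₀ t.2.2 (div_nonneg (hx.1 k).1 hspos.le) ((div_le_one hspos).2 (hle k))
    · simp only [γ]
      rcases step_eq hx k with h | h | h <;> rw [h]
      · left; ring
      · right; left; ring
      · right; right; rfl
  have hc : γ ⟨s, hspos.le, hs.le⟩ = x := by
    funext n; simp [γ, hspos.ne']
  rw [← hc]
  refine not_mem_endpointSet hγ hinj hX ?_ ?_
  · simpa [Subtype.ext_iff] using hspos.ne'
  · simpa [Subtype.ext_iff] using hs.ne

/-- For `(r, ρ) ∈ NC`, `F = L_{r,ρ} ∪ {(t,t) | t ∈ [0,1]}` and `𝐱 ∈ X_F⁺`: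
`𝐱` is an end-point of the continuum `X_F⁺` iff the supremum of its coordinates is `1`. -/
theorem endpoint_iff_iSup_eq_one_union_diag (r ρ : ℝ) (h : NC r ρ) (x : ℕ → ℝ)
    (hx : x ∈ mahavier (lineL r ∪ lineL ρ ∪ unitDiag)) :
    x ∈ endpointSet (mahavier (lineL r ∪ lineL ρ ∪ unitDiag)) ↔ (⨆ n, x n) = 1 := by
  obtain ⟨hr, hr1, hρ1, -⟩ := h
  have hρ : 0 < ρ := one_pos.trans hρ1
  constructor
  · intro hend
    by_contra hne
    have hlt : (⨆ n, x n) < 1 := lt_of_le_of_ne (ciSup_le fun n => (hx.1 n).2) hne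
    rcases (hx.1 0).1.eq_or_lt with h0 | h0
    · have : x = fun _ => 0 := funext (eq_zero_of_zero hx h0.symm)
      exact zero_not_mem_endpointSet hr hr1 (this ▸ hend)
    · exact not_mem_endpointSet_of_iSup_lt_one hx h0 hlt hend
  · intro hsup
    refine ⟨hx, fun A hA ⟨e⟩ hxA => ?_⟩
    let c : I := e ⟨x, hxA⟩
    have hc : ((e.symm c : A) : ℕ → ℝ) = x := by simp [c]
    refine ⟨e.symm, ?_⟩
    by_contra hcon
    have hc0 : c ≠ 0 := fun hc0 => hcon (Or.inl (by rw [← hc0, hc]))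
    have hc1 : c ≠ 1 := fun hc1 => hcon (Or.inr (by rw [← hc1, hc]))
    let g : ℝ → ℕ → ℝ := fun t => e.symm (projIcc 0 1 zero_le_one t)
    have hgc : g c = x := by simp only [g, projIcc_val, hc]
    have hinj : InjOn g (Icc 0 1) := fun s hs t ht hst =>
      (strictMonoOn_projIcc zero_le_one).injOn hs ht (e.symm.injective (Subtype.ext hst))
    have hcont : Continuous g :=
      continuous_subtype_val.comp (e.symm.continuous.comp continuous_projIcc)
    refine not_interior_of_iSup_eq_one hr hρ hcont (fun t => hA (e.symm _).2) hinj
      (unitInterval.pos_iff_ne_zero.2 hc0) (unitInterval.lt_one_iff_ne_one.2 hc1) ?_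
    rw [hgc, hsup]
end
end

section
/- Let (r,ρ) ∈ NC and let F = L_{r,ρ} ∪ {(t,t) | t ∈ [0,1]}. Then the set of end-points E(X_F^+) is dense in X_F^+, i.e., Cl(E(X_F^+)) = X_F^+: for every 𝐱 ∈ X_F^+ and every ε > 0 there exists 𝐞 ∈ E(X_F^+) with D(𝐞,𝐱) < ε, where D is the metric on X_F^+. -/
/-!
A nonzero point `x` of the Mahavier product is determined by its height `x 0` and its sequence of
ratios `x (k + 1) / x k ∈ {r, ρ, 1}`, which give it the form `x n = p n * x 0`.

A point with coordinates arbitrarily close to `1` is an end-point (`mem_endpointSet_of_sup`). Along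
a connected family of points with positive height the ratios are locally constant, hence constant
(`exists_coord_eq_mul`). If such a point `x` were interior to an arc, then near it the arc would be
parametrised injectively by the height, because the `p n` are fixed. But `p n * y 0 ≤ 1` for all
`y` on the arc and all `n`, together with `sup p n * x 0 = 1`, forces `y 0 ≤ x 0`, and a continuous
injective function on an interval has no interior maximum.

These points are dense: keep finitely many coordinates of a nonzero `x`, and continue with the
greedy orbit which multiplies by `ρ` when this stays in `[0, 1]` and by `r` otherwise. Since `r`
and `ρ` never connect, the products `y * r ^ k * ρ ^ l` with `k, l : ℕ` accumulate at `1` from below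
(`exists_pow_mul_pow_near_one`), and the greedy orbit dominates every such product which does not
exceed `1` (`le_greedy`). The vertex `0` is a limit of constant sequences.
-/

open Set Topology

noncomputable section

/-! ### Points whose coordinates approach `1` are end-points -/

lemma step_iff (r ρ u v : ℝ) (hu : u ∈ Icc (0 : ℝ) 1) (hv : v ∈ Icc (0 : ℝ) 1) :
    (u, v) ∈ lineL r ∪ lineL ρ ∪ unitDiag ↔ v = r * u ∨ v = ρ * u ∨ v = u := by
  simp only [lineL, unitDiag, mem_union, mem_ofPred_eq]
  tauto

/-- Over a preconnected set on which the zeroth coordinate is positive, a continuous family of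
points of the product has a constant sequence of ratios. -/
lemma exists_coord_eq_mul {r ρ : ℝ} (hr : 0 < r) (hρ : 0 < ρ) {α : Type*} [TopologicalSpace α]
    (g : α → ℕ → ℝ) (hg : Continuous g)
    (hX : ∀ t, g t ∈ mahavier (lineL r ∪ lineL ρ ∪ unitDiag))
    {C : Set α} (hC : IsPreconnected C) (hpos : ∀ t ∈ C, 0 < g t 0) (n : ℕ) :
    ∃ p : ℝ, 0 < p ∧ ∀ t ∈ C, g t n = p * g t 0 := by
  induction n with
  | zero => exact ⟨1, one_pos, fun t _ => by simp⟩
  | succ n ih =>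
    obtain ⟨p, hp, hpt⟩ := ih
    have hn : ∀ t ∈ C, 0 < g t n := fun t ht => by
      rw [hpt t ht]; exact mul_pos hp (hpos t ht)
    have hcont : ∀ m, Continuous fun t => g t m := fun m => (continuous_apply m).comp hg
    have hfc : ContinuousOn (fun t => g t (n + 1) / g t n) C :=
      (hcont (n + 1)).continuousOn.div (hcont n).continuousOn fun t ht => (hn t ht).ne'
    have hmaps : MapsTo (fun t => g t (n + 1) / g t n) C ({r, ρ, 1} : Set ℝ) := by
      intro t ht
      have h1 := (step_iff r ρ _ _ ((hX t).1 n) ((hX t).1 (n + 1))).1 ((hX t).2 n)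
      have h2 := (hn t ht).ne'
      simp only [mem_insert_iff, mem_singleton_iff, div_eq_iff h2, one_mul]
      exact h1
    obtain ⟨q, hq, hqt⟩ := hC.eqOn_const_of_mapsTo (toFinite _).isDiscrete hfc hmaps ⟨r, by simp⟩
    have hq0 : 0 < q := by
      rcases hq with rfl | rfl | rfl
      exacts [hr, hρ, one_pos]
    refine ⟨q * p, mul_pos hq0 hp, fun t ht => ?_⟩
    have h3 : g t (n + 1) / g t n = q := hqt ht
    rw [div_eq_iff (hn t ht).ne', hpt t ht] at h3
    rw [h3, mul_assoc]

lemma mem_endpointSet_of_sup {r ρ : ℝ} (hr : 0 < r) (hρ : 0 < ρ) (x : ℕ → ℝ)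
    (hx : x ∈ mahavier (lineL r ∪ lineL ρ ∪ unitDiag))
    (hsup : ∀ δ > 0, ∃ n, 1 - δ < x n) :
    x ∈ endpointSet (mahavier (lineL r ∪ lineL ρ ∪ unitDiag)) := by
  refine ⟨hx, fun A hA ⟨h⟩ hxA => ?_⟩
  set g : unitInterval → ℕ → ℝ := fun t => (h.symm t : ℕ → ℝ) with hg_def
  have hg : Continuous g := continuous_subtype_val.comp h.symm.continuous
  have hinj : Function.Injective g := Subtype.val_injective.comp h.symm.injective
  have hX : ∀ t, g t ∈ mahavier (lineL r ∪ lineL ρ ∪ unitDiag) := fun t => hA (h.symm t).2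
  obtain ⟨s, hs⟩ : ∃ s, g s = x := ⟨h ⟨x, hxA⟩, by simp [hg_def]⟩
  by_cases hs0 : s = 0
  · exact ⟨h.symm, Or.inl (by rw [← hs, hs0])⟩
  by_cases hs1 : s = 1
  · exact ⟨h.symm, Or.inr (by rw [← hs, hs1])⟩
  exfalso
  -- If the zeroth coordinate vanished, every coordinate would.
  have hx0 : 0 < g s 0 := by
    rw [hs]
    refine lt_of_le_of_ne (hx.1 0).1 fun h0 => ?_
    have hz : ∀ n, x n = 0 := by
      intro n
      induction n with
      | zero => exact h0.symm
      | succ n ih =>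
        rcases (step_iff r ρ _ _ (hx.1 n) (hx.1 (n + 1))).1 (hx.2 n) with h1 | h1 | h1 <;>
          simp [h1, ih]
    obtain ⟨n, hn⟩ := hsup 1 one_pos
    rw [hz n] at hn
    norm_num at hn
  have hc0 : Continuous fun t => g t 0 := (continuous_apply 0).comp hg
  have hU : {t | 0 < g t 0} ∈ 𝓝 s := (isOpen_lt continuous_const hc0).mem_nhds hx0
  have hs0' : 0 < s := unitInterval.pos_iff_ne_zero.2 hs0
  have hs1' : s < 1 := unitInterval.lt_one_iff_ne_one.2 hs1
  obtain ⟨a', b', ⟨ha', hb'⟩, hsub⟩ := (mem_nhds_iff_exists_Ioo_subset' ⟨0, hs0'⟩ ⟨1, hs1'⟩).1 hU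
  obtain ⟨a, haa, has⟩ := exists_between ha'
  obtain ⟨b, hsb, hbb⟩ := exists_between hb'
  have hpos : ∀ t ∈ Icc a b, 0 < g t 0 := fun t ht =>
    hsub ⟨haa.trans_le ht.1, ht.2.trans_lt hbb⟩
  have hcoord := exists_coord_eq_mul hr hρ g hg hX (isPreconnected_Icc (a := a) (b := b)) hpos
  have hsI : s ∈ Icc a b := ⟨has.le, hsb.le⟩
  have haI : a ∈ Icc a b := ⟨le_rfl, (has.trans hsb).le⟩
  have hbI : b ∈ Icc a b := ⟨(has.trans hsb).le, le_rfl⟩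
  have hmax : ∀ t ∈ Icc a b, g t 0 ≤ g s 0 := by
    intro t ht
    by_contra! hlt
    have ht0 := hpos t ht
    obtain ⟨n, hn⟩ := hsup (1 - g s 0 / g t 0) (sub_pos.2 ((div_lt_one ht0).2 hlt))
    obtain ⟨p, hp, hpt⟩ := hcoord n
    have h1 : p * g t 0 ≤ 1 := hpt t ht ▸ ((hX t).1 n).2
    rw [← hs, hpt s hsI, sub_sub_cancel, div_lt_iff₀ ht0] at hn
    nlinarith
  have hinj0 : InjOn (fun t => g t 0) (Icc a b) := by
    intro t ht u hu htu
    refine hinj (funext fun n => ?_)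
    obtain ⟨p, -, hpt⟩ := hcoord n
    rw [hpt t ht, hpt u hu]
    exact congrArg (p * ·) htu
  rcases hc0.continuousOn.strictMonoOn_of_injOn_Icc' (has.trans hsb).le hinj0 with hm | hm
  · exact absurd (hm hsI hbI hsb) (hmax b hbI).not_gt
  · exact absurd (hm haI hsI has) (hmax a haI).not_gt

/-! ### Approximating `1` from below by products of powers -/

/-- Nonnegative integer combinations of two incommensurable reals of opposite signs approximate
every `u ≥ 0` from below. -/
lemma exists_nat_comb_near {a b : ℝ} (ha : a < 0) (hb : 0 < b)
    (hab : ∀ k l : ℤ, (k : ℝ) * a = l * b → k = 0 ∧ l = 0) {u δ : ℝ} (hu : 0 ≤ u) (hδ : 0 < δ) :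
    ∃ k l : ℕ, u - δ < k * a + l * b ∧ k * a + l * b ≤ u := by
  have hd : Dense (AddSubgroup.closure ({a, b} : Set ℝ) : Set ℝ) := by
    refine (AddSubgroup.dense_or_cyclic _).resolve_right ?_
    rintro ⟨c, hc⟩
    have h1 : a ∈ AddSubgroup.closure ({c} : Set ℝ) :=
      hc ▸ AddSubgroup.subset_closure (by simp)
    have h2 : b ∈ AddSubgroup.closure ({c} : Set ℝ) :=
      hc ▸ AddSubgroup.subset_closure (by simp)
    obtain ⟨m, hm⟩ := AddSubgroup.mem_closure_singleton.1 h1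
    obtain ⟨n, hn⟩ := AddSubgroup.mem_closure_singleton.1 h2
    rw [zsmul_eq_mul] at hm hn
    obtain ⟨-, hm0⟩ := hab n m (by rw [← hm, ← hn]; ring)
    rw [hm0] at hm
    simp at hm
    exact ha.ne hm.symm
  have hε : 0 < min δ (min (-a) b) := lt_min hδ (lt_min (neg_pos.2 ha) hb)
  obtain ⟨x, hx, hx1, hx2⟩ := hd.exists_between (neg_lt_zero.2 hε)
  obtain ⟨m, n, rfl⟩ := AddSubgroup.mem_closure_pair.1 hx
  rw [zsmul_eq_mul, zsmul_eq_mul] at hx1 hx2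
  have hδ' := min_le_left δ (min (-a) b)
  have ha' := (min_le_right δ (min (-a) b)).trans (min_le_left _ _)
  -- A short combination cannot have coefficients of strictly opposite signs.
  have hsign : (0 ≤ m ∧ 0 ≤ n) ∨ (m ≤ 0 ∧ n ≤ 0) := by
    by_contra! hcon
    rcases lt_trichotomy m 0 with hm | hm | hm
    · have hn : 0 < n := hcon.2 hm.le
      have h1 : (m : ℝ) ≤ -1 := by exact_mod_cast (by omega : m ≤ -1)
      have h2 : (1 : ℝ) ≤ n := by exact_mod_cast hn
      nlinarith
    · exact absurd (hcon.1 hm.ge) (not_lt.2 (hcon.2 hm.le).le)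
    · have hn : n < 0 := hcon.1 hm.le
      have h1 : (n : ℝ) ≤ -1 := by exact_mod_cast (by omega : n ≤ -1)
      have h2 : (1 : ℝ) ≤ m := by exact_mod_cast hm
      nlinarith
  rcases hsign with ⟨hm, hn⟩ | ⟨hm, hn⟩
  · -- The short combination is negative: overshoot `u` by a multiple of `b`, then walk down.
    lift m to ℕ using hm
    lift n to ℕ using hn
    push_cast at hx1 hx2
    obtain ⟨L, hL⟩ := exists_nat_ge (u / b)
    rw [div_le_iff₀ hb] at hL
    set w : ℝ := -(m * a + n * b) with hw
    have hw0 : 0 < w := by linarith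
    refine ⟨⌈(L * b - u) / w⌉₊ * m, L + ⌈(L * b - u) / w⌉₊ * n, ?_⟩
    set j := ⌈(L * b - u) / w⌉₊
    have h1 : (L * b - u) / w ≤ j := Nat.le_ceil _
    have h2 : (j : ℝ) < (L * b - u) / w + 1 :=
      Nat.ceil_lt_add_one (div_nonneg (by linarith) hw0.le)
    rw [div_le_iff₀ hw0] at h1
    rw [div_add_one hw0.ne', lt_div_iff₀ hw0] at h2
    have h3 : (((j * m : ℕ) : ℝ) * a + ((L + j * n : ℕ) : ℝ) * b) = L * b - j * w := by
      push_cast; rw [hw]; ring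
    rw [h3]
    constructor <;> linarith
  · -- The opposite of the short combination is positive: walk up to `u` from `0`.
    obtain ⟨m, rfl⟩ : ∃ m' : ℕ, m = -(m' : ℤ) := ⟨m.natAbs, by omega⟩
    obtain ⟨n, rfl⟩ : ∃ n' : ℕ, n = -(n' : ℤ) := ⟨n.natAbs, by omega⟩
    push_cast at hx1 hx2
    set w : ℝ := m * a + n * b with hw
    have hw0 : 0 < w := by linarith
    refine ⟨⌊u / w⌋₊ * m, ⌊u / w⌋₊ * n, ?_⟩
    set j := ⌊u / w⌋₊
    have h1 : (j : ℝ) ≤ u / w := Nat.floor_le (div_nonneg hu hw0.le)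
    have h2 : u / w < j + 1 := Nat.lt_floor_add_one _
    rw [le_div_iff₀ hw0] at h1
    rw [div_lt_iff₀ hw0] at h2
    have h3 : (((j * m : ℕ) : ℝ) * a + ((j * n : ℕ) : ℝ) * b) = j * w := by
      push_cast; rw [hw]; ring
    rw [h3]
    constructor <;> linarith

lemma exists_pow_mul_pow_near_one {r ρ : ℝ} (h : NC r ρ) {y δ : ℝ} (hy : 0 < y) (hy1 : y ≤ 1)
    (hδ : 0 < δ) : ∃ k l : ℕ, 1 - δ < y * r ^ k * ρ ^ l ∧ y * r ^ k * ρ ^ l ≤ 1 := by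
  obtain ⟨hr, hr1, hρ1, hnc⟩ := h
  have hρ : 0 < ρ := one_pos.trans hρ1
  obtain ⟨k, l, h1, h2⟩ := exists_nat_comb_near (Real.log_neg hr hr1) (Real.log_pos hρ1)
    (fun k l hkl => (hnc k l).1 (Real.log_injOn_pos (zpow_pos hr k) (zpow_pos hρ l)
      (by rw [Real.log_zpow, Real.log_zpow, hkl])))
    (u := -Real.log y) (neg_nonneg.2 (Real.log_nonpos hy.le hy1)) hδ
  have hz : 0 < y * r ^ k * ρ ^ l := by positivity
  have hlog : Real.log (y * r ^ k * ρ ^ l) = Real.log y + (k * Real.log r + l * Real.log ρ) := by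
    rw [Real.log_mul (by positivity) (by positivity), Real.log_mul (by positivity) (by positivity),
      Real.log_pow, Real.log_pow, add_assoc]
  refine ⟨k, l, ?_, ?_⟩
  · have := Real.log_le_sub_one_of_pos hz
    linarith
  · rw [← Real.log_nonpos_iff hz.le]
    linarith

/-! ### Greedy orbits -/

/-- The orbit of `y` which is multiplied by `ρ` whenever the result is at most `1`, and by `r`
otherwise. -/
def greedy (r ρ y : ℝ) : ℕ → ℝ
  | 0 => y
  | n + 1 => if ρ * greedy r ρ y n ≤ 1 then ρ * greedy r ρ y n else r * greedy r ρ y n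

lemma greedy_mem_Ioc {r ρ y : ℝ} (hr : 0 < r) (hr1 : r < 1) (hρ : 0 < ρ)
    (hy : y ∈ Ioc (0 : ℝ) 1) (n : ℕ) : greedy r ρ y n ∈ Ioc (0 : ℝ) 1 := by
  induction n with
  | zero => exact hy
  | succ n ih =>
    rw [greedy]
    split_ifs with hif
    · exact ⟨mul_pos hρ ih.1, hif⟩
    · exact ⟨mul_pos hr ih.1, mul_le_one₀ hr1.le ih.1.le ih.2⟩

/-- After the first multiplication by `r`, the greedy orbit stays above `r / ρ`. -/
lemma greedy_form {r ρ y : ℝ} (hr : 0 < r) (hr1 : r < 1) (hρ : 1 < ρ)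
    (hy : y ∈ Ioc (0 : ℝ) 1) (n : ℕ) :
    ∃ k l : ℕ, k + l = n ∧ greedy r ρ y n = y * r ^ k * ρ ^ l ∧
      (k = 0 ∨ r < ρ * greedy r ρ y n) := by
  induction n with
  | zero => exact ⟨0, 0, rfl, by simp [greedy], Or.inl rfl⟩
  | succ n ih =>
    obtain ⟨k, l, hkl, hform, hlow⟩ := ih
    have hpos := (greedy_mem_Ioc hr hr1 (one_pos.trans hρ) hy n).1
    rw [greedy]
    split_ifs with hif
    · refine ⟨k, l + 1, by omega, by rw [hform]; ring, hlow.imp_right fun h1 => ?_⟩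
      nlinarith [mul_pos (one_pos.trans hρ) hpos]
    · refine ⟨k + 1, l, by omega, by rw [hform]; ring, Or.inr ?_⟩
      nlinarith

/-- Among all products with a given number of factors `r` and `ρ` that do not exceed `1`, the
greedy orbit realises the largest. -/
lemma le_greedy {r ρ y : ℝ} (hr : 0 < r) (hr1 : r < 1) (hρ : 1 < ρ)
    (hy : y ∈ Ioc (0 : ℝ) 1) (K L : ℕ) (hz : y * r ^ K * ρ ^ L ≤ 1) :
    y * r ^ K * ρ ^ L ≤ greedy r ρ y (K + L) := by
  have hρ0 : 0 < ρ := one_pos.trans hρ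
  obtain ⟨k, l, hkl, hform, hlow⟩ := greedy_form hr hr1 hρ hy (K + L)
  -- Trading factors `ρ` for factors `r` decreases a product.
  have htrade : ∀ k l m : ℕ, y * r ^ (k + m) * ρ ^ l ≤ y * r ^ k * ρ ^ (l + m) := by
    intro k l m
    have h1 : r ^ m ≤ ρ ^ m := pow_le_pow_left₀ hr.le (hr1.trans hρ).le m
    have h2 : 0 ≤ y * r ^ k * ρ ^ l := by have := hy.1; positivity
    calc y * r ^ (k + m) * ρ ^ l = y * r ^ k * ρ ^ l * r ^ m := by ring
      _ ≤ y * r ^ k * ρ ^ l * ρ ^ m := mul_le_mul_of_nonneg_left h1 h2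
      _ = y * r ^ k * ρ ^ (l + m) := by ring
  rcases le_or_gt k K with hk | hk
  · obtain ⟨m, rfl⟩ := Nat.exists_eq_add_of_le hk
    obtain rfl : l = L + m := by omega
    rw [hform]
    exact htrade k L m
  · -- With more factors `r` than necessary, the product would be at least `ρ / r` times larger
    -- than the orbit, which is above `r / ρ`.
    exfalso
    obtain ⟨m, rfl⟩ := Nat.exists_eq_add_of_lt hk
    obtain rfl : L = l + m + 1 := by omega
    have hlow' : r < ρ * greedy r ρ y (K + (l + m + 1)) := hlow.resolve_left (by omega)
    have h1 := htrade (K + 1) l m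
    have h2 : ρ * greedy r ρ y (K + (l + m + 1)) ≤ r * (y * r ^ K * ρ ^ (l + m + 1)) :=
      calc ρ * greedy r ρ y (K + (l + m + 1))
          = ρ * (y * r ^ (K + 1 + m) * ρ ^ l) := by rw [hform]; ring
        _ ≤ ρ * (y * r ^ (K + 1) * ρ ^ (l + m)) := mul_le_mul_of_nonneg_left h1 hρ0.le
        _ = r * (y * r ^ K * ρ ^ (l + m + 1)) := by ring
    nlinarith

/-! ### Density -/

/-- Any finite initial part of a point with positive coordinates extends to an end-point. -/
lemma exists_endpoint_agree {r ρ : ℝ} (h : NC r ρ) (x : ℕ → ℝ)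
    (hx : x ∈ mahavier (lineL r ∪ lineL ρ ∪ unitDiag)) (N : ℕ) (hN : 0 < x N) :
    ∃ e ∈ endpointSet (mahavier (lineL r ∪ lineL ρ ∪ unitDiag)), ∀ k ≤ N, e k = x k := by
  have hr := h.1
  have hr1 := h.2.1
  have hρ1 := h.2.2.1
  have hρ : 0 < ρ := one_pos.trans hρ1
  have hy : x N ∈ Ioc (0 : ℝ) 1 := ⟨hN, (hx.1 N).2⟩
  set e : ℕ → ℝ := fun k => if k ≤ N then x k else greedy r ρ (x N) (k - N) with he
  have he1 : ∀ k ≤ N, e k = x k := fun k hk => by simp [he, hk]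
  have he2 : ∀ m, e (N + m) = greedy r ρ (x N) m := by
    intro m
    cases m with
    | zero => simp [he, greedy]
    | succ m => simp [he]
  have heI : ∀ k, e k ∈ Icc (0 : ℝ) 1 := by
    intro k
    rcases le_total k N with hk | hk
    · rw [he1 k hk]; exact hx.1 k
    · obtain ⟨m, rfl⟩ := Nat.exists_eq_add_of_le hk
      rw [he2]
      exact Ioc_subset_Icc_self (greedy_mem_Ioc hr hr1 hρ hy m)
  refine ⟨e, mem_endpointSet_of_sup hr hρ e ⟨heI, fun k => ?_⟩ fun δ hδ => ?_, he1⟩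
  · rcases lt_or_ge k N with hk | hk
    · rw [he1 k hk.le, he1 (k + 1) hk]; exact hx.2 k
    · obtain ⟨m, rfl⟩ := Nat.exists_eq_add_of_le hk
      rw [step_iff r ρ _ _ (heI _) (heI _), add_assoc, he2, he2, greedy]
      split_ifs
      · exact Or.inr (Or.inl rfl)
      · exact Or.inl rfl
  · obtain ⟨K, L, h1, h2⟩ := exists_pow_mul_pow_near_one h hy.1 hy.2 hδ
    exact ⟨N + (K + L), by rw [he2]; exact h1.trans_le (le_greedy hr hr1 hρ1 hy K L h2)⟩

lemma isClosed_mahavier (r ρ : ℝ) :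
    IsClosed (mahavier (lineL r ∪ lineL ρ ∪ unitDiag)) := by
  have heq : mahavier (lineL r ∪ lineL ρ ∪ unitDiag) =
      {x : ℕ → ℝ | (∀ k, x k ∈ Icc (0 : ℝ) 1) ∧
        ∀ k, x (k + 1) = r * x k ∨ x (k + 1) = ρ * x k ∨ x (k + 1) = x k} := by
    ext x
    exact and_congr_right fun hI =>
      forall_congr' fun k => step_iff r ρ _ _ (hI k) (hI (k + 1))
  rw [heq]
  simp only [ofPred_and, ofPred_forall, ofPred_or]
  refine (isClosed_iInter fun k => isClosed_Icc.preimage (continuous_apply k)).inter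
    (isClosed_iInter fun k => ?_)
  refine IsClosed.union ?_ (IsClosed.union ?_ ?_) <;>
    exact isClosed_eq (by fun_prop) (by fun_prop)

lemma mem_closure_of_pos {r ρ : ℝ} (h : NC r ρ) (x : ℕ → ℝ)
    (hx : x ∈ mahavier (lineL r ∪ lineL ρ ∪ unitDiag)) (hpos : ∀ n, 0 < x n) :
    x ∈ closure (endpointSet (mahavier (lineL r ∪ lineL ρ ∪ unitDiag))) := by
  choose e he hex using fun N => exists_endpoint_agree h x hx N (hpos N)
  refine mem_closure_of_tendsto (f := e) (b := Filter.atTop) ?_ (Filter.Eventually.of_forall he)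
  rw [tendsto_pi_nhds]
  intro k
  refine tendsto_const_nhds.congr' ?_
  filter_upwards [Filter.eventually_ge_atTop k] with N hN using (hex N k hN).symm

/-- For `(r, ρ) ∈ NC` and `F = L_{r,ρ} ∪ {(t,t) | t ∈ [0,1]}`, the set of
end-points `E(X_F⁺)` is dense in `X_F⁺`: its closure equals `X_F⁺`. -/
theorem endpointSet_dense (r ρ : ℝ) (h : NC r ρ) :
    closure (endpointSet (mahavier (lineL r ∪ lineL ρ ∪ unitDiag)))
      = mahavier (lineL r ∪ lineL ρ ∪ unitDiag) := by
  refine (closure_minimal (fun x hx => hx.1) (isClosed_mahavier r ρ)).antisymm fun x hx => ?_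
  have hstep := fun n => (step_iff r ρ _ _ (hx.1 n) (hx.1 (n + 1))).1 (hx.2 n)
  have hρ : 0 < ρ := one_pos.trans h.2.2.1
  rcases (hx.1 0).1.eq_or_lt with h0 | h0
  · have hz : x = 0 := by
      funext n
      induction n with
      | zero => exact h0.symm
      | succ n ih =>
        have ih' : x n = 0 := ih
        rcases hstep n with h1 | h1 | h1 <;> simp [h1, ih']
    have hlim : Filter.Tendsto (fun (n : ℕ) (_ : ℕ) => 1 / ((n : ℝ) + 1)) Filter.atTop (𝓝 x) := by
      rw [hz, tendsto_pi_nhds]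
      exact fun _ => tendsto_one_div_add_atTop_nhds_zero_nat
    refine isClosed_closure.mem_of_tendsto hlim (Filter.Eventually.of_forall fun n => ?_)
    have hI : 1 / ((n : ℝ) + 1) ∈ Icc (0 : ℝ) 1 :=
      ⟨by positivity, (div_le_one (by positivity)).2 (by linarith [n.cast_nonneg (α := ℝ)])⟩
    exact mem_closure_of_pos h _
      ⟨fun _ => hI, fun _ => (step_iff r ρ _ _ hI hI).2 (Or.inr (Or.inr rfl))⟩
      fun _ => by positivity
  · refine mem_closure_of_pos h x hx fun n => ?_
    induction n with
    | zero => exact h0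
    | succ n ih =>
      rcases hstep n with h1 | h1 | h1 <;> rw [h1]
      exacts [mul_pos h.1 ih, mul_pos hρ ih, ih]
end
end

section
/- Let (r,ρ) ∈ NC, let F = L_{r,ρ} ∪ {(t,t) | t ∈ [0,1]} and G = L_r ∪ {(t,t) | t ∈ [0,1]}. Then X_G^+ ⊆ X_F^+, X_G^+ is a Cantor fan, and consequently there exists a topological embedding of the Cantor fan C into X_F^+. -/
/-!
Both spaces are quotients of the compact space `(ℕ → Bool) × [0,1]` by the relation that collapses
the base `t = 0` to one point. A point of `X_G⁺` with first coordinate `t` is determined by the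
binary sequence recording at which steps the value is multiplied by `r` (rather than kept); for
`t ≠ 0` this sequence can be recovered because `r ≠ 0, 1`, and for `t = 0` it is irrelevant. The
Cantor fan is parametrised the same way, using the homeomorphism of the Cantor set with
`ℕ → Bool`. Two continuous surjections from a compact space onto Hausdorff spaces with the same
fibres have homeomorphic targets (`homeomorph_of_same_fibres`), and the embedding into `X_F⁺` is
the resulting homeomorphism followed by the inclusion.
-/

open Set Topology

noncomputable section

theorem homeomorph_of_same_fibres {S Y Z : Type*} [TopologicalSpace S] [TopologicalSpace Y]
    [TopologicalSpace Z] [CompactSpace S] [T2Space Y] [T2Space Z] {f : S → Y} {g : S → Z}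
    (hf : Continuous f) (hg : Continuous g) (hfs : Function.Surjective f)
    (hgs : Function.Surjective g) (hfg : ∀ a b, f a = f b ↔ g a = g b) :
    Nonempty (Y ≃ₜ Z) := by
  have hq : IsQuotientMap f := hf.isClosedMap.isQuotientMap hf hfs
  choose s hs using hfs
  let φ : Y → Z := fun y => g (s y)
  have hφ : ∀ a, φ (f a) = g a := fun a => (hfg _ _).1 (hs (f a))
  have hφc : Continuous φ := by
    rw [hq.continuous_iff]
    have : φ ∘ f = g := funext hφ
    rwa [this]
  have hb : Function.Bijective φ := by
    refine ⟨fun y y' h => ?_, fun z => ?_⟩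
    · rw [← hs y, ← hs y']
      exact (hfg _ _).2 h
    · obtain ⟨a, rfl⟩ := hgs z
      exact ⟨f a, hφ a⟩
  have : CompactSpace Y := hq.surjective.compactSpace hf
  exact ⟨Continuous.homeoOfEquivCompactToT2 (f := Equiv.ofBijective φ hb) hφc⟩

/-- The partial products `∏_{i < n} a_i`, where `a_i` is `r` or `1` according to the bit `a i`. -/
def fanCoeff (r : ℝ) (a : ℕ → Bool) (n : ℕ) : ℝ :=
  ∏ i ∈ Finset.range n, (if a i then r else 1)

theorem fanCoeff_zero (r : ℝ) (a : ℕ → Bool) : fanCoeff r a 0 = 1 := by simp [fanCoeff]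

theorem fanCoeff_succ (r : ℝ) (a : ℕ → Bool) (n : ℕ) :
    fanCoeff r a (n + 1) = fanCoeff r a n * (if a n then r else 1) := by
  simp [fanCoeff, Finset.prod_range_succ]

theorem fanCoeff_mem {r : ℝ} (h0 : 0 < r) (h1 : r < 1) (a : ℕ → Bool) (n : ℕ) :
    0 < fanCoeff r a n ∧ fanCoeff r a n ≤ 1 := by
  induction n with
  | zero => simp [fanCoeff_zero]
  | succ n ih =>
    rw [fanCoeff_succ]
    split_ifs
    · exact ⟨mul_pos ih.1 h0, by nlinarith [ih.1, ih.2]⟩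
    · simpa using ih

theorem continuous_fanCoeff (r : ℝ) (n : ℕ) : Continuous fun a => fanCoeff r a n := by
  unfold fanCoeff
  refine continuous_finsetProd _ fun i _ => ?_
  exact (continuous_of_discreteTopology (f := fun b : Bool => if b then r else 1)).comp
    (continuous_apply i)

theorem fanCoeff_injective {r : ℝ} (h0 : 0 < r) (h1 : r < 1) {a b : ℕ → Bool}
    (h : ∀ n, fanCoeff r a n = fanCoeff r b n) : a = b := by
  funext n
  have hn := h (n + 1)
  rw [fanCoeff_succ, fanCoeff_succ, h n] at hn
  have := mul_left_cancel₀ (fanCoeff_mem h0 h1 b n).1.ne' hn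
  cases ha : a n <;> cases hb : b n <;> simp_all

theorem fanCoeff_mul_mem {r : ℝ} (h0 : 0 < r) (h1 : r < 1) (a : ℕ → Bool) (t : unitInterval) :
    (fun n => fanCoeff r a n * (t : ℝ)) ∈ mahavier (lineL r ∪ unitDiag) := by
  have hk : ∀ k, fanCoeff r a k * (t : ℝ) ∈ Icc (0 : ℝ) 1 := fun k => by
    obtain ⟨hp, hl⟩ := fanCoeff_mem h0 h1 a k
    exact ⟨mul_nonneg hp.le t.2.1, mul_le_one₀ hl t.2.1 t.2.2⟩
  refine ⟨hk, fun k => ?_⟩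
  by_cases ha : a k
  · refine Or.inl ⟨hk k, hk (k + 1), ?_⟩
    simp only [fanCoeff_succ, ha, if_true]
    ring
  · refine Or.inr ⟨hk k, ?_⟩
    simp [fanCoeff_succ, ha]

/-- The parametrisation of `X_G⁺` by `(ℕ → Bool) × [0,1]`. -/
def mahavierParam (r : ℝ) (h0 : 0 < r) (h1 : r < 1) (p : (ℕ → Bool) × unitInterval) :
    ↥(mahavier (lineL r ∪ unitDiag)) :=
  ⟨fun n => fanCoeff r p.1 n * (p.2 : ℝ), fanCoeff_mul_mem h0 h1 p.1 p.2⟩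

theorem continuous_mahavierParam (r : ℝ) (h0 : 0 < r) (h1 : r < 1) :
    Continuous (mahavierParam r h0 h1) := by
  refine Continuous.subtype_mk (continuous_pi fun n => ?_) _
  exact ((continuous_fanCoeff r n).comp continuous_fst).mul
    (continuous_subtype_val.comp continuous_snd)

theorem surjective_mahavierParam (r : ℝ) (h0 : 0 < r) (h1 : r < 1) :
    Function.Surjective (mahavierParam r h0 h1) := by
  classical
  rintro ⟨x, hx, hF⟩
  refine ⟨(fun n => decide (x (n + 1) = r * x n), ⟨x 0, hx 0⟩), Subtype.ext (funext fun n => ?_)⟩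
  change fanCoeff r _ n * x 0 = x n
  induction n with
  | zero => simp [fanCoeff_zero]
  | succ n ih =>
    rw [fanCoeff_succ, mul_right_comm, ih]
    by_cases hn : x (n + 1) = r * x n
    · simp [hn, mul_comm]
    · rcases hF n with h | h
      · exact absurd h.2.2 hn
      · have : x (n + 1) = x n := h.2
        rw [if_neg (by simpa using hn), mul_one, this]

theorem mahavierParam_eq_iff (r : ℝ) (h0 : 0 < r) (h1 : r < 1) (p q : (ℕ → Bool) × unitInterval) :
    mahavierParam r h0 h1 p = mahavierParam r h0 h1 q ↔
      p.2 = q.2 ∧ ((p.2 : ℝ) = 0 ∨ p.1 = q.1) := by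
  obtain ⟨a, t⟩ := p
  obtain ⟨b, s⟩ := q
  constructor
  · intro h
    have hn : ∀ n, fanCoeff r a n * (t : ℝ) = fanCoeff r b n * (s : ℝ) :=
      fun n => congrFun (congrArg Subtype.val h) n
    have hts : t = s := Subtype.ext (by simpa [fanCoeff_zero] using hn 0)
    subst hts
    refine ⟨rfl, or_iff_not_imp_left.2 fun ht => ?_⟩
    exact fanCoeff_injective h0 h1 fun n => mul_right_cancel₀ ht (hn n)
  · rintro ⟨h, h'⟩
    dsimp only at h h'
    subst h
    rcases h' with ht | rfl
    · exact Subtype.ext (funext fun n => by simp [mahavierParam, ht])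
    · rfl

theorem mem_cantorFan_iff (p : ℝ × ℝ) :
    p ∈ cantorFan ↔ ∃ c ∈ cantorSet, ∃ t ∈ Icc (0 : ℝ) 1, p = (t * c, -t) := by
  simp only [cantorFan, mem_iUnion, segment_eq_image, mem_image, exists_prop]
  refine exists_congr fun c => and_congr_right fun _ => exists_congr fun t =>
    and_congr_right fun _ => ?_
  simp [eq_comm]

/-- The parametrisation of the Cantor fan by `(ℕ → Bool) × [0,1]`. -/
def cantorFanParam (p : (ℕ → Bool) × unitInterval) : ↥cantorFan :=
  ⟨((p.2 : ℝ) * (cantorSetHomeomorphNatToBool.symm p.1 : ℝ), -(p.2 : ℝ)),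
    (mem_cantorFan_iff _).2 ⟨_, (cantorSetHomeomorphNatToBool.symm p.1).2, _, p.2.2, rfl⟩⟩

theorem continuous_cantorFanParam : Continuous cantorFanParam := by
  unfold cantorFanParam
  fun_prop

theorem surjective_cantorFanParam : Function.Surjective cantorFanParam := by
  rintro ⟨p, hp⟩
  obtain ⟨c, hc, t, ht, rfl⟩ := (mem_cantorFan_iff p).1 hp
  exact ⟨(cantorSetHomeomorphNatToBool ⟨c, hc⟩, ⟨t, ht⟩), by simp [cantorFanParam]⟩

theorem cantorFanParam_eq_iff (p q : (ℕ → Bool) × unitInterval) :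
    cantorFanParam p = cantorFanParam q ↔ p.2 = q.2 ∧ ((p.2 : ℝ) = 0 ∨ p.1 = q.1) := by
  obtain ⟨a, t⟩ := p
  obtain ⟨b, s⟩ := q
  constructor
  · intro h
    have h1 := congrArg Subtype.val h
    simp only [cantorFanParam, Prod.mk.injEq, neg_inj] at h1
    obtain ⟨h1, h2⟩ := h1
    have hts : t = s := Subtype.ext h2
    subst hts
    refine ⟨rfl, or_iff_not_imp_left.2 fun ht => ?_⟩
    exact cantorSetHomeomorphNatToBool.symm.injective (Subtype.ext (mul_left_cancel₀ ht h1))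
  · rintro ⟨h, h'⟩
    dsimp only at h h'
    subst h
    rcases h' with ht | rfl
    · exact Subtype.ext (by simp [cantorFanParam, ht])
    · rfl

/-- For `(r, ρ) ∈ NC`, `F = L_{r,ρ} ∪ {(t,t)}` and `G = L_r ∪ {(t,t)}`:
`X_G⁺ ⊆ X_F⁺`, `X_G⁺` is a Cantor fan, and consequently the Cantor fan embeds into `X_F⁺`. -/
theorem mahavier_G_subset_and_embedding (r ρ : ℝ) (h : NC r ρ) :
    mahavier (lineL r ∪ unitDiag) ⊆ mahavier (lineL r ∪ lineL ρ ∪ unitDiag) ∧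
    Nonempty (↥(mahavier (lineL r ∪ unitDiag)) ≃ₜ ↥cantorFan) ∧
    ∃ f : ↥cantorFan → ↥(mahavier (lineL r ∪ lineL ρ ∪ unitDiag)),
      Topology.IsEmbedding f := by
  obtain ⟨h0, h1, -, -⟩ := h
  have hsub : mahavier (lineL r ∪ unitDiag) ⊆ mahavier (lineL r ∪ lineL ρ ∪ unitDiag) :=
    fun x hx => ⟨hx.1, fun k => (hx.2 k).imp_left Or.inl⟩
  obtain ⟨e⟩ : Nonempty (↥(mahavier (lineL r ∪ unitDiag)) ≃ₜ ↥cantorFan) :=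
    homeomorph_of_same_fibres (continuous_mahavierParam r h0 h1) continuous_cantorFanParam
      (surjective_mahavierParam r h0 h1) surjective_cantorFanParam fun p q =>
        (mahavierParam_eq_iff r h0 h1 p q).trans (cantorFanParam_eq_iff p q).symm
  exact ⟨hsub, ⟨e⟩, inclusion hsub ∘ e.symm,
    (IsEmbedding.inclusion hsub).comp e.symm.isEmbedding⟩
end
end
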